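/- arXiv:2409.03594 — 5 statements merged into one kernel-verified Lean document; each statement's English description precedes it below -/
import Mathlib

section
/- For every mixed instance on a simple graph, there exists a partial orientation (a partial allocation in which every allocated edge goes to one of its two endpoint agents) that is EFX^0_- and satisfies Properties (1)–(8). -/
open Finset

variable {V : Type*} [DecidableEq V]

/-- `e` has strictly positive marginal value (is a *good*) for the valuation `v`
relative to the item set `M`. -/
def IsGoodFor (v : Finset (Sym2 V) → ℝ) (M : Finset (Sym2 V)) (e : Sym2 V) : Prop :=
  ∀ S ⊆ M.erase e, v S < v (insert e S)

/-- `e` has strictly negative marginal value (is a *chore*) for the valuation `v`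
relative to the item set `M`. -/
def IsChoreFor (v : Finset (Sym2 V) → ℝ) (M : Finset (Sym2 V)) (e : Sym2 V) : Prop :=
  ∀ S ⊆ M.erase e, v (insert e S) < v S

/-- `e` has zero marginal value (is a *dummy*) for the valuation `v`
relative to the item set `M`. -/
def IsDummyFor (v : Finset (Sym2 V) → ℝ) (M : Finset (Sym2 V)) (e : Sym2 V) : Prop :=
  ∀ S ⊆ M.erase e, v (insert e S) = v S

/-- A valid instance on a simple graph: the edge set `M` consists of non-loop edges,
every edge is (for every agent) a good, a chore, or a dummy, and every edge not
incident to an agent is a dummy for that agent. -/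
def ValidInstance (M : Finset (Sym2 V)) (v : V → Finset (Sym2 V) → ℝ) : Prop :=
  (∀ e ∈ M, ¬ e.IsDiag) ∧
  (∀ (i : V), ∀ e ∈ M, IsGoodFor (v i) M e ∨ IsChoreFor (v i) M e ∨ IsDummyFor (v i) M e) ∧
  (∀ (i : V), ∀ e ∈ M, i ∉ e → IsDummyFor (v i) M e)

/-- `X` is a (complete) allocation of the items in `M`: bundles are contained in `M`
and every item belongs to exactly one bundle. -/
def IsAllocation (M : Finset (Sym2 V)) (X : V → Finset (Sym2 V)) : Prop :=
  (∀ i, X i ⊆ M) ∧ ∀ e ∈ M, ∃! i, e ∈ X i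

/-- Every allocated edge goes to one of its endpoint agents. -/
def IsOrientation (X : V → Finset (Sym2 V)) : Prop :=
  ∀ i, ∀ e ∈ X i, i ∈ e

/-- Agent `i` envies agent `j`. -/
def Envies (v : V → Finset (Sym2 V) → ℝ) (X : V → Finset (Sym2 V)) (i j : V) : Prop :=
  v i (X i) < v i (X j)

/-- EFX condition on the envied bundle, removing an item whose removal *strictly*
decreases the value (superscript `+`). -/
def CondEnviedStrict (v : V → Finset (Sym2 V) → ℝ) (X : V → Finset (Sym2 V)) : Prop :=
  ∀ i j, Envies v X i j → ∀ e ∈ X j,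
    v i ((X j).erase e) < v i (X j) → v i ((X j).erase e) ≤ v i (X i)

/-- EFX condition on the envied bundle, removing an item whose removal weakly
decreases the value (superscript `0`). -/
def CondEnviedWeak (v : V → Finset (Sym2 V) → ℝ) (X : V → Finset (Sym2 V)) : Prop :=
  ∀ i j, Envies v X i j → ∀ e ∈ X j,
    v i ((X j).erase e) ≤ v i (X j) → v i ((X j).erase e) ≤ v i (X i)

/-- EFX condition on the envious agent's own bundle, removing an item whose removal
*strictly* increases the value (subscript `-`). -/
def CondOwnStrict (v : V → Finset (Sym2 V) → ℝ) (X : V → Finset (Sym2 V)) : Prop :=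
  ∀ i j, Envies v X i j → ∀ e ∈ X i,
    v i (X i) < v i ((X i).erase e) → v i (X j) ≤ v i ((X i).erase e)

/-- EFX condition on the envious agent's own bundle, removing an item whose removal
weakly increases the value (subscript `0`). -/
def CondOwnWeak (v : V → Finset (Sym2 V) → ℝ) (X : V → Finset (Sym2 V)) : Prop :=
  ∀ i j, Envies v X i j → ∀ e ∈ X i,
    v i (X i) ≤ v i ((X i).erase e) → v i (X j) ≤ v i ((X i).erase e)

open scoped Classical

/-- A partial orientation: pairwise disjoint bundles of edges of `M`, each allocated
edge going to one of its endpoint agents. -/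
def IsPartialOrientation (M : Finset (Sym2 V)) (X : V → Finset (Sym2 V)) : Prop :=
  (∀ i, X i ⊆ M) ∧ (∀ i j, i ≠ j → Disjoint (X i) (X j)) ∧ ∀ i, ∀ e ∈ X i, i ∈ e

/-- `E_i^{≥0}`: the edges of `M` incident to `i` that are goods or dummies for `i`. -/
noncomputable def EgeNonneg (v : V → Finset (Sym2 V) → ℝ) (M : Finset (Sym2 V))
    (i : V) : Finset (Sym2 V) :=
  M.filter (fun e => i ∈ e ∧ (IsGoodFor (v i) M e ∨ IsDummyFor (v i) M e))

/-- `R(X)`: the unallocated edges. -/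
def Unallocated [Fintype V] (M : Finset (Sym2 V)) (X : V → Finset (Sym2 V)) :
    Finset (Sym2 V) :=
  M \ Finset.univ.biUnion X

/-- Agent `i` is envied by some agent. -/
def Envied (v : V → Finset (Sym2 V) → ℝ) (X : V → Finset (Sym2 V)) (i : V) : Prop :=
  ∃ j, Envies v X j i

/-- Agent `j` is *safe* for agent `i`: `i` does not envy `j` even if `j` additionally
receives all of `i`'s unallocated incident non-chore edges. -/
noncomputable def SafeFor [Fintype V] (v : V → Finset (Sym2 V) → ℝ)
    (M : Finset (Sym2 V)) (X : V → Finset (Sym2 V)) (j i : V) : Prop :=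
  v i (X j ∪ (EgeNonneg v M i ∩ Unallocated M X)) ≤ v i (X i)

/-- Properties (1)–(8) of a partial allocation. -/
noncomputable def Props [Fintype V] (M : Finset (Sym2 V))
    (v : V → Finset (Sym2 V) → ℝ) (X : V → Finset (Sym2 V)) : Prop :=
  -- (1)
  (∀ i : V, ∀ e ∈ EgeNonneg v M i ∩ Unallocated M X, v i {e} ≤ v i (X i)) ∧
  -- (2)
  (∀ i : V, Envied v X i → v i (EgeNonneg v M i ∩ Unallocated M X) ≤ v i (X i)) ∧
  -- (3)
  (∀ i j : V, Envied v X i → Envied v X j →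
      ∃ k, ¬ Envied v X k ∧ SafeFor v M X k i ∧ SafeFor v M X k j) ∧
  -- (4)
  (∀ i : V, ∀ e ∈ X i, ¬ IsChoreFor (v i) M e) ∧
  -- (5)
  (∀ i : V, Envied v X i → (X i).card = 1) ∧
  -- (6)
  (∀ i : V, Envied v X i → ∃! j, Envies v X j i) ∧
  -- (7): no envy cycle
  (∀ i : V, ¬ Relation.TransGen (Envies v X) i i) ∧
  -- (8)
  (∀ (s : ℕ) (f : ℕ → V), 1 ≤ s →
      (∀ l, 1 ≤ l → l ≤ s → Envies v X (f l) (f (l - 1))) →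
      ¬ Envied v X (f s) →
      ∀ l, 1 ≤ l → l ≤ s → SafeFor v M X (f l) (f 0))

section Helpers

/-- Adding goods does not lower the value. -/
lemma val_union_ge {M : Finset (Sym2 V)} {v : V → Finset (Sym2 V) → ℝ} {i : V}
    (S D : Finset (Sym2 V)) (hS : S ⊆ M) (hD : ∀ e ∈ D, e ∈ M ∧ IsGoodFor (v i) M e) :
    v i S ≤ v i (S ∪ D) := by
  induction D using Finset.induction_on with
  | empty => simp
  | insert a D ha ih =>
    have h1 := ih (fun e he => hD e (Finset.mem_insert_of_mem he))
    by_cases haS : a ∈ S ∪ D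
    · have : S ∪ insert a D = S ∪ D := by
        rw [Finset.union_insert, Finset.insert_eq_of_mem haS]
      rw [this]; exact h1
    · have h2 := (hD a (Finset.mem_insert_self _ _)).2 (S ∪ D) (by
        intro e he
        rw [Finset.mem_erase]
        refine ⟨fun h => haS (h ▸ he), ?_⟩
        rcases Finset.mem_union.1 he with h | h
        · exact hS h
        · exact (hD e (Finset.mem_insert_of_mem h)).1)
      rw [Finset.union_insert]
      linarith

lemma val_mono {M : Finset (Sym2 V)} {v : V → Finset (Sym2 V) → ℝ} {i : V}
    (S D : Finset (Sym2 V)) (hSD : S ⊆ D) (hD : ∀ e ∈ D, e ∈ M ∧ IsGoodFor (v i) M e) :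
    v i S ≤ v i D := by
  have := val_union_ge (v := v) (i := i) S D (fun e he => (hD e (hSD he)).1) hD
  rwa [Finset.union_eq_right.2 hSD] at this

/-- Adding non-incident edges does not change the value. -/
lemma val_union_dummy {M : Finset (Sym2 V)} {v : V → Finset (Sym2 V) → ℝ}
    (hv : ValidInstance M v) {i : V}
    (S D : Finset (Sym2 V)) (hS : S ⊆ M) (hD : ∀ e ∈ D, e ∈ M ∧ i ∉ e) :
    v i (S ∪ D) = v i S := by
  induction D using Finset.induction_on with
  | empty => simp
  | insert a D ha ih =>
    have h1 := ih (fun e he => hD e (Finset.mem_insert_of_mem he))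
    by_cases haS : a ∈ S ∪ D
    · have : S ∪ insert a D = S ∪ D := by
        rw [Finset.union_insert, Finset.insert_eq_of_mem haS]
      rw [this]; exact h1
    · obtain ⟨h3, h4⟩ := hD a (Finset.mem_insert_self _ _)
      have h2 := hv.2.2 i a h3 h4 (S ∪ D) (by
        intro e he
        rw [Finset.mem_erase]
        refine ⟨fun h => haS (h ▸ he), ?_⟩
        rcases Finset.mem_union.1 he with h | h
        · exact hS h
        · exact (hD e (Finset.mem_insert_of_mem h)).1)
      rw [Finset.union_insert, h2, h1]

/-- Dropping non-goods does not lower the value. -/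
lemma val_filter_ge {M : Finset (Sym2 V)} {v : V → Finset (Sym2 V) → ℝ}
    (hv : ValidInstance M v) {i : V}
    (S : Finset (Sym2 V)) (hS : S ⊆ M) :
    v i S ≤ v i (S.filter (fun e => IsGoodFor (v i) M e)) := by
  have key : ∀ D : Finset (Sym2 V), D ⊆ M → (∀ e ∈ D, ¬ IsGoodFor (v i) M e) →
      ∀ S : Finset (Sym2 V), S ⊆ M → v i (S ∪ D) ≤ v i S := by
    intro D
    induction D using Finset.induction_on with
    | empty => intros; simp
    | insert a D ha ih =>
      intro hDM hD S hS
      have h1 := ih (fun e he => hDM (Finset.mem_insert_of_mem he))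
        (fun e he => hD e (Finset.mem_insert_of_mem he)) S hS
      by_cases haS : a ∈ S ∪ D
      · have : S ∪ insert a D = S ∪ D := by
          rw [Finset.union_insert, Finset.insert_eq_of_mem haS]
        rw [this]; exact h1
      · have hsub : S ∪ D ⊆ M.erase a := by
          intro e he
          rw [Finset.mem_erase]
          refine ⟨fun h => haS (h ▸ he), ?_⟩
          rcases Finset.mem_union.1 he with h | h
          · exact hS h
          · exact hDM (Finset.mem_insert_of_mem h)
        rw [Finset.union_insert]
        rcases hv.2.1 i a (hDM (Finset.mem_insert_self _ _)) with h | h | h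
        · exact absurd h (hD a (Finset.mem_insert_self _ _))
        · have := h _ hsub; linarith
        · have := h _ hsub; linarith
  have h := key (S.filter (fun e => ¬ IsGoodFor (v i) M e))
    (fun e he => hS (Finset.mem_filter.1 he).1) (fun e he => (Finset.mem_filter.1 he).2)
    (S.filter (fun e => IsGoodFor (v i) M e)) (fun e he => hS (Finset.mem_filter.1 he).1)
  have h2 : S.filter (fun e => IsGoodFor (v i) M e) ∪
      S.filter (fun e => ¬ IsGoodFor (v i) M e) = S := by
    ext e; simp only [Finset.mem_union, Finset.mem_filter]; tauto
  rwa [h2] at h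

lemma good_incident {M : Finset (Sym2 V)} {v : V → Finset (Sym2 V) → ℝ}
    (hv : ValidInstance M v) {i : V} {e : Sym2 V} (he : e ∈ M) (hg : IsGoodFor (v i) M e) :
    i ∈ e := by
  by_contra h
  have h1 := hg ∅ (by simp)
  have h2 := hv.2.2 i e he h ∅ (by simp)
  linarith

lemma val_nonincident {M : Finset (Sym2 V)} {v : V → Finset (Sym2 V) → ℝ}
    (hv : ValidInstance M v) {x : V} {e : Sym2 V} (he : e ∈ M) (hx : x ∉ e) :
    v x {e} = v x ∅ := by
  have h2 := hv.2.2 x e he hx ∅ (by simp)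
  simpa using h2

/-- Value, for `x`, of a star at `c ≠ x` containing the edge `x c`. -/
lemma val_star_mem {M : Finset (Sym2 V)} {v : V → Finset (Sym2 V) → ℝ}
    (hv : ValidInstance M v) {x c : V} (hxc : x ≠ c) (Z : Finset (Sym2 V))
    (hZ : ∀ e ∈ Z, e ∈ M ∧ c ∈ e) (h : s(x, c) ∈ Z) : v x Z = v x {s(x, c)} := by
  have := val_union_dummy hv (i := x) {s(x, c)} (Z.erase s(x, c))
    (by simpa using (hZ _ h).1) (by
      intro e he
      rw [Finset.mem_erase] at he
      refine ⟨(hZ e he.2).1, fun hx => he.1 ?_⟩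
      exact (Sym2.mem_and_mem_iff hxc).1 ⟨hx, (hZ e he.2).2⟩)
  rw [← this]
  congr 1
  rw [← Finset.insert_eq, Finset.insert_erase h]

lemma val_star_not_mem {M : Finset (Sym2 V)} {v : V → Finset (Sym2 V) → ℝ}
    (hv : ValidInstance M v) {x c : V} (hxc : x ≠ c) (S Z : Finset (Sym2 V)) (hS : S ⊆ M)
    (hZ : ∀ e ∈ Z, e ∈ M ∧ c ∈ e) (h : s(x, c) ∉ Z) : v x (S ∪ Z) = v x S := by
  apply val_union_dummy hv (i := x) S Z hS
  intro e he
  refine ⟨(hZ e he).1, fun hx => h ?_⟩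
  rwa [← (Sym2.mem_and_mem_iff hxc).1 ⟨hx, (hZ e he).2⟩]

lemma val_star_le {M : Finset (Sym2 V)} {v : V → Finset (Sym2 V) → ℝ}
    (hv : ValidInstance M v) {x c : V} (hxc : x ≠ c) (Z : Finset (Sym2 V))
    (hZ : ∀ e ∈ Z, e ∈ M ∧ c ∈ e) (α : ℝ) (h0 : v x ∅ ≤ α) (h : ∀ e ∈ Z, v x {e} ≤ α) :
    v x Z ≤ α := by
  by_cases hm : s(x, c) ∈ Z
  · rw [val_star_mem hv hxc Z hZ hm]; exact h _ hm
  · have := val_star_not_mem hv hxc ∅ Z (by simp) hZ hm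
    rw [Finset.empty_union] at this
    rw [this]; exact h0

/-- The invariant. -/
structure EInv (M : Finset (Sym2 V)) (v : V → Finset (Sym2 V) → ℝ)
    (X : V → Finset (Sym2 V)) : Prop where
  orient : ∀ i, ∀ e ∈ X i, e ∈ M ∧ i ∈ e ∧ IsGoodFor (v i) M e
  disj : ∀ i j e, e ∈ X i → e ∈ X j → i = j
  unal : ∀ e ∈ M, (∀ k, e ∉ X k) → ∀ x, v x {e} ≤ v x (X x)
  single : ∀ a b, Envies v X a b → (X b).card = 1

/-- There is a universally safe agent. -/
def UnivSafe (v : V → Finset (Sym2 V) → ℝ) (X : V → Finset (Sym2 V)) : Prop :=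
  ∃ u, ¬ Envied v X u ∧ ∀ e ∈ X u, ∀ k ∈ e, ¬ Envied v X k

variable {M : Finset (Sym2 V)} {v : V → Finset (Sym2 V) → ℝ} {X : V → Finset (Sym2 V)}

lemma val_empty_le (horient : ∀ i, ∀ e ∈ X i, e ∈ M ∧ i ∈ e ∧ IsGoodFor (v i) M e) (x : V) :
    v x ∅ ≤ v x (X x) :=
  val_mono (M := M) ∅ (X x) (by simp) (fun e he => ⟨(horient x e he).1, (horient x e he).2.2⟩)

lemma envies_ne {a b : V} (h : Envies v X a b) : a ≠ b := by
  rintro rfl; exact lt_irrefl _ h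

lemma envies_mem (hv : ValidInstance M v)
    (horient : ∀ i, ∀ e ∈ X i, e ∈ M ∧ i ∈ e ∧ IsGoodFor (v i) M e) {a b : V}
    (h : Envies v X a b) : s(a, b) ∈ X b := by
  by_contra hm
  have h1 := val_star_not_mem hv (envies_ne h) ∅ (X b) (by simp)
    (fun e he => ⟨(horient b e he).1, (horient b e he).2.1⟩) hm
  rw [Finset.empty_union] at h1
  have h2 := val_empty_le horient a
  unfold Envies at h
  linarith

lemma envies_eq (hv : ValidInstance M v) (hI : EInv M v X) {a b : V}
    (h : Envies v X a b) : X b = {s(a, b)} := by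
  obtain ⟨e, he⟩ := Finset.card_eq_one.1 (hI.single a b h)
  have := envies_mem hv hI.orient h
  rw [he, Finset.mem_singleton] at this
  rw [he, this]

lemma envies_unique (hv : ValidInstance M v) (hI : EInv M v X) {a a' b : V}
    (h : Envies v X a b) (h' : Envies v X a' b) : a = a' := by
  have h1 := envies_eq hv hI h
  rw [envies_eq hv hI h', Finset.singleton_inj] at h1
  exact (Sym2.congr_left.1 h1).symm

lemma unenvied_edge (hv : ValidInstance M v)
    (horient : ∀ i, ∀ e ∈ X i, e ∈ M ∧ i ∈ e ∧ IsGoodFor (v i) M e) {c : V}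
    (hc : ¬ Envied v X c) {e : Sym2 V} (he : e ∈ X c) (x : V) : v x {e} ≤ v x (X x) := by
  by_cases hxc : x = c
  · subst hxc
    exact val_mono (M := M) {e} (X x) (by simpa using he)
      (fun e he => ⟨(horient x e he).1, (horient x e he).2.2⟩)
  · by_cases hx : x ∈ e
    · have h1 : e = s(x, c) := (Sym2.mem_and_mem_iff hxc).1 ⟨hx, (horient c e he).2.1⟩
      have h2 := val_star_mem hv hxc (X c)
        (fun e he => ⟨(horient c e he).1, (horient c e he).2.1⟩) (h1 ▸ he)
      rw [h1, ← h2]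
      by_contra hlt
      exact hc ⟨x, not_le.1 hlt⟩
    · rw [val_nonincident hv (horient c e he).1 hx]
      exact val_empty_le horient x

/-- The new allocation. -/
def newA (X B : V → Finset (Sym2 V)) (T C : Finset V) (p : V → V) (c : V) : Finset (Sym2 V) :=
  if c ∈ T then B c else if c ∈ C then X (p c) else X c

/-- The data for a chain-shifting step. -/
structure StepData (M : Finset (Sym2 V)) (v : V → Finset (Sym2 V) → ℝ)
    (X B : V → Finset (Sym2 V)) (T C N : Finset V) (p : V → V) : Prop where
  TC : T ⊆ C
  NC : N ⊆ C
  card : T.card ≤ N.card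
  unenv : ∀ n ∈ N, ¬ Envied v X n
  hp : ∀ c ∈ C, c ∉ T → p c ∈ C ∧ Envies v X c (p c)
  hB : ∀ t ∈ T, ∀ e ∈ B t, e ∈ M ∧ IsGoodFor (v t) M e ∧
    (∀ x, v x {e} ≤ v x (X x)) ∧ (∀ k, k ∉ C → e ∉ X k)
  hBd : ∀ t ∈ T, ∀ t' ∈ T, ∀ e, e ∈ B t → e ∈ B t' → t = t'

variable {B : V → Finset (Sym2 V)} {T C N : Finset V} {p : V → V}

lemma newA_T {c : V} (h : c ∈ T) : newA X B T C p c = B c := by simp [newA, h]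
lemma newA_C {c : V} (h : c ∈ C) (h' : c ∉ T) : newA X B T C p c = X (p c) := by
  simp [newA, h, h']
lemma newA_N (hTC : T ⊆ C) {c : V} (h : c ∉ C) : newA X B T C p c = X c := by
  have : c ∉ T := fun h' => h (hTC h')
  simp [newA, h, this]

lemma step_surj (hv : ValidInstance M v) (hI : EInv M v X) (hd : StepData M v X B T C N p)
    {c : V} (hc : c ∈ C) (hcN : c ∉ N) : ∃ c' ∈ C, c' ∉ T ∧ p c' = c := by
  have hsub : (C \ T).image p ⊆ C \ N := by
    intro d hd'
    obtain ⟨c', hc', rfl⟩ := Finset.mem_image.1 hd'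
    rw [Finset.mem_sdiff] at hc'
    obtain ⟨h1, h2⟩ := hd.hp c' hc'.1 hc'.2
    rw [Finset.mem_sdiff]
    exact ⟨h1, fun h => hd.unenv _ h ⟨c', h2⟩⟩
  have hinj : Set.InjOn p (C \ T : Finset V) := by
    intro a ha b hb hab
    simp only [Finset.coe_sdiff, Set.mem_sdiff, Finset.mem_coe] at ha hb
    have h1 := (hd.hp a ha.1 ha.2).2
    have h2 := (hd.hp b hb.1 hb.2).2
    rw [← hab] at h2
    exact envies_unique hv hI h1 h2
  have hcard : (C \ N).card ≤ ((C \ T).image p).card := by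
    rw [Finset.card_image_of_injOn hinj, Finset.card_sdiff_of_subset hd.TC,
      Finset.card_sdiff_of_subset hd.NC]
    have := hd.card
    omega
  have heq := Finset.eq_of_subset_of_card_le hsub hcard
  have : c ∈ (C \ T).image p := by rw [heq, Finset.mem_sdiff]; exact ⟨hc, hcN⟩
  obtain ⟨c', hc', h⟩ := Finset.mem_image.1 this
  rw [Finset.mem_sdiff] at hc'
  exact ⟨c', hc'.1, hc'.2, h⟩

lemma step_shift (hv : ValidInstance M v) (hI : EInv M v X) (hd : StepData M v X B T C N p)
    {c : V} (hc : c ∈ C) (hcT : c ∉ T) : newA X B T C p c = {s(c, p c)} := by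
  rw [newA_C hc hcT, envies_eq hv hI (hd.hp c hc hcT).2]

lemma step_orient (hv : ValidInstance M v) (hI : EInv M v X) (hd : StepData M v X B T C N p) :
    ∀ i, ∀ e ∈ newA X B T C p i, e ∈ M ∧ i ∈ e ∧ IsGoodFor (v i) M e := by
  intro i e he
  by_cases hT : i ∈ T
  · rw [newA_T hT] at he
    obtain ⟨h1, h2, _⟩ := hd.hB i hT e he
    exact ⟨h1, good_incident hv h1 h2, h2⟩
  by_cases hC : i ∈ C
  · have henv := (hd.hp i hC hT).2
    have he' := he
    rw [newA_C hC hT] at he'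
    rw [step_shift hv hI hd hC hT, Finset.mem_singleton] at he
    subst he
    have hM := (hI.orient _ _ he').1
    refine ⟨hM, by simp, ?_⟩
    have hX := envies_eq hv hI henv
    unfold Envies at henv
    rw [hX] at henv
    have h0 := val_empty_le hI.orient i
    rcases hv.2.1 i _ hM with h | h | h
    · exact h
    · have := h ∅ (by simp)
      rw [insert_empty_eq] at this; linarith
    · have := h ∅ (by simp)
      rw [insert_empty_eq] at this; linarith
  · rw [newA_N hd.TC hC] at he
    exact hI.orient i e he

lemma step_edge_envied (hv : ValidInstance M v) (hI : EInv M v X) {a b : V}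
    (h : Envies v X a b) {e : Sym2 V} (he : e ∈ X b) : v a (X a) < v a {e} := by
  have hX := envies_eq hv hI h
  rw [hX, Finset.mem_singleton] at he
  unfold Envies at h
  rw [hX] at h
  rwa [he]

lemma step_disj (hv : ValidInstance M v) (hI : EInv M v X) (hd : StepData M v X B T C N p) :
    ∀ i j e, e ∈ newA X B T C p i → e ∈ newA X B T C p j → i = j := by
  have aux : ∀ i j e, i ∈ T → j ∉ T → e ∈ newA X B T C p i → e ∈ newA X B T C p j → False := by
    intro i j e hi hj h1 h2
    rw [newA_T hi] at h1
    obtain ⟨_, _, h3, h4⟩ := hd.hB i hi e h1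
    by_cases hC : j ∈ C
    · rw [newA_C hC hj] at h2
      have := step_edge_envied hv hI (hd.hp j hC hj).2 h2
      have := h3 j
      linarith
    · rw [newA_N hd.TC hC] at h2
      exact h4 j hC h2
  intro i j e h1 h2
  by_cases hi : i ∈ T <;> by_cases hj : j ∈ T
  · rw [newA_T hi] at h1; rw [newA_T hj] at h2
    exact hd.hBd i hi j hj e h1 h2
  · exact (aux i j e hi hj h1 h2).elim
  · exact (aux j i e hj hi h2 h1).elim
  · by_cases hiC : i ∈ C <;> by_cases hjC : j ∈ C
    · rw [newA_C hiC hi] at h1; rw [newA_C hjC hj] at h2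
      have h3 := hI.disj _ _ _ h1 h2
      have h4 := (hd.hp i hiC hi).2
      rw [h3] at h4
      exact envies_unique hv hI h4 (hd.hp j hjC hj).2
    · rw [newA_C hiC hi] at h1; rw [newA_N hd.TC hjC] at h2
      have h3 := hI.disj _ _ _ h1 h2
      exact (hjC (h3 ▸ (hd.hp i hiC hi).1)).elim
    · rw [newA_N hd.TC hiC] at h1; rw [newA_C hjC hj] at h2
      have h3 := hI.disj _ _ _ h2 h1
      exact (hiC (h3 ▸ (hd.hp j hjC hj).1)).elim
    · rw [newA_N hd.TC hiC] at h1; rw [newA_N hd.TC hjC] at h2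
      exact hI.disj _ _ _ h1 h2

lemma step_unal' (hv : ValidInstance M v) (hI : EInv M v X) (hd : StepData M v X B T C N p)
    {e : Sym2 V} (h : ∀ k, e ∉ newA X B T C p k) :
    (∀ k, e ∉ X k) ∨ ∃ n ∈ N, e ∈ X n := by
  by_contra hcon
  push Not at hcon
  obtain ⟨⟨k, hk⟩, h2⟩ := hcon
  by_cases hkC : k ∈ C
  · obtain ⟨c', h3, h4, h5⟩ := step_surj hv hI hd hkC (fun hN => h2 k hN hk)
    apply h c'
    rw [newA_C h3 h4, h5]; exact hk
  · apply h k
    rw [newA_N hd.TC hkC]; exact hk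

lemma step_unal (hv : ValidInstance M v) (hI : EInv M v X) (hd : StepData M v X B T C N p)
    {e : Sym2 V} (heM : e ∈ M) (h : ∀ k, e ∉ newA X B T C p k) (x : V) :
    v x {e} ≤ v x (X x) := by
  rcases step_unal' hv hI hd h with h | ⟨n, hn, hen⟩
  · exact hI.unal e heM h x
  · exact unenvied_edge hv hI.orient (hd.unenv n hn) hen x

lemma step_improve (hd : StepData M v X B T C N p) {x : V} (hx : x ∉ T) :
    v x (X x) ≤ v x (newA X B T C p x) := by
  by_cases hC : x ∈ C
  · rw [newA_C hC hx]; exact (hd.hp x hC hx).2.le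
  · rw [newA_N hd.TC hC]

lemma step_noenvy (hv : ValidInstance M v) (hI : EInv M v X) (hd : StepData M v X B T C N p)
    {x c : V} (hx : v x (X x) ≤ v x (newA X B T C p x)) (hc : c ∈ C) :
    ¬ Envies v (newA X B T C p) x c := by
  intro henv
  have hne := envies_ne henv
  unfold Envies at henv
  by_cases hT : c ∈ T
  · rw [newA_T hT] at henv
    have := val_star_le hv hne (B c) (fun e he => by
      obtain ⟨h1, h2, _⟩ := hd.hB c hT e he
      exact ⟨h1, good_incident hv h1 h2⟩) _ (val_empty_le hI.orient x)
      (fun e he => (hd.hB c hT e he).2.2.1 x)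
    linarith
  · rw [newA_C hc hT] at henv
    have h1 : Envies v X x (p c) := by unfold Envies; linarith
    exact hne (envies_unique hv hI h1 (hd.hp c hc hT).2)

lemma step_oldenvy (hd : StepData M v X B T C N p)
    {x k : V} (hx : v x (X x) ≤ v x (newA X B T C p x)) (hk : k ∉ C)
    (h : Envies v (newA X B T C p) x k) : Envies v X x k := by
  unfold Envies at *
  rw [newA_N hd.TC hk] at h
  linarith

/-- Number of envied agents. -/
noncomputable def cnt [Fintype V] (v : V → Finset (Sym2 V) → ℝ) (X : V → Finset (Sym2 V)) : ℕ :=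
  (Finset.univ.filter (fun i => Envied v X i)).card

/-- Lossless step. -/
lemma step_lossless [Fintype V] (hv : ValidInstance M v) (hI : EInv M v X)
    (hd : StepData M v X B T C N p)
    (hT : ∀ t ∈ T, v t (X t) ≤ v t (B t)) (hne : ∃ c ∈ C, c ∉ T) :
    ∃ Y, EInv M v Y ∧ UnivSafe v Y ∧ cnt v Y < cnt v X := by
  have himp : ∀ x, v x (X x) ≤ v x (newA X B T C p x) := by
    intro x
    by_cases h : x ∈ T
    · rw [newA_T h]; exact hT x h
    · exact step_improve hd h
  have hunC : ∀ c ∈ C, ¬ Envied v (newA X B T C p) c := fun c hc ⟨x, hx⟩ =>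
    step_noenvy hv hI hd (himp x) hc hx
  obtain ⟨c, hc, hcT⟩ := hne
  refine ⟨newA X B T C p, ⟨step_orient hv hI hd, step_disj hv hI hd, ?_, ?_⟩, ⟨c, hunC c hc, ?_⟩, ?_⟩
  · intro e he h x
    exact (step_unal hv hI hd he h x).trans (himp x)
  · intro a b hab
    have hb : b ∉ C := fun h => hunC b h ⟨a, hab⟩
    rw [newA_N hd.TC hb]
    exact hI.single a b (step_oldenvy hd (himp a) hb hab)
  · intro e he k hk
    rw [step_shift hv hI hd hc hcT, Finset.mem_singleton] at he
    subst he
    rcases Sym2.mem_iff.1 hk with rfl | rfl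
    · exact hunC _ hc
    · exact hunC _ (hd.hp c hc hcT).1
  · apply Finset.card_lt_card
    rw [Finset.ssubset_iff_of_subset]
    · refine ⟨p c, ?_, ?_⟩
      · simp only [Finset.mem_filter, Finset.mem_univ, true_and]
        exact ⟨c, (hd.hp c hc hcT).2⟩
      · simp only [Finset.mem_filter, Finset.mem_univ, true_and]
        exact hunC _ (hd.hp c hc hcT).1
    · intro b hb
      simp only [Finset.mem_filter, Finset.mem_univ, true_and] at hb ⊢
      have hbC : b ∉ C := fun h => hunC b h hb
      obtain ⟨a, ha⟩ := hb
      exact ⟨a, step_oldenvy hd (himp a) hbC ha⟩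

/-- Lossy step, from a state with all bundles of size at most one. -/
lemma step_lossy (hv : ValidInstance M v) (hI : EInv M v X)
    (hd : StepData M v X B T C N p) (hX : ∀ k, (X k).card ≤ 1) {j : V} (hj : j ∈ T)
    (hT : ∀ t ∈ T, t ≠ j → v t (X t) ≤ v t (B t) ∧ v j (B t) ≤ v j (B j))
    (hun : ∀ e ∈ M, (∀ k, e ∉ newA X B T C p k) → v j {e} ≤ v j (B j))
    {u : V} (hu : ∀ x, x ≠ j → ¬ Envies v X x u) (hu' : ¬ Envies v (newA X B T C p) j u)
    (hue : ∀ e ∈ newA X B T C p u, ∀ k ∈ e, k ∈ C ∨ k = u)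
    (hue' : ∀ e ∈ newA X B T C p u, ∀ k ∈ e, ¬ Envies v (newA X B T C p) j k) :
    EInv M v (newA X B T C p) ∧ UnivSafe v (newA X B T C p) := by
  have himp : ∀ x, x ≠ j → v x (X x) ≤ v x (newA X B T C p x) := by
    intro x hxj
    by_cases h : x ∈ T
    · rw [newA_T h]; exact (hT x h hxj).1
    · exact step_improve hd h
  have hu0 : ¬ Envied v (newA X B T C p) u := by
    rintro ⟨x, hx⟩
    by_cases hxj : x = j
    · exact hu' (hxj ▸ hx)
    by_cases huC : u ∈ C
    · exact step_noenvy hv hI hd (himp x hxj) huC hx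
    · exact hu x hxj (step_oldenvy hd (himp x hxj) huC hx)
  refine ⟨⟨step_orient hv hI hd, step_disj hv hI hd, ?_, ?_⟩, u, hu0, ?_⟩
  · intro e he h x
    by_cases hxj : x = j
    · subst hxj
      rw [newA_T hj]
      exact hun e he h
    · exact (step_unal hv hI hd he h x).trans (himp x hxj)
  · intro a b hab
    by_cases haj : a = j
    · subst haj
      have hpos : 1 ≤ (newA X B T C p b).card :=
        Finset.card_pos.2 ⟨_, envies_mem hv (step_orient hv hI hd) hab⟩
      have hle : (newA X B T C p b).card ≤ 1 := by
        by_cases hbT : b ∈ T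
        · exfalso
          have hne := envies_ne hab
          unfold Envies at hab
          rw [newA_T hbT, newA_T hj] at hab
          have := (hT b hbT hne.symm).2
          linarith
        by_cases hbC : b ∈ C
        · rw [newA_C hbC hbT]; exact hX _
        · rw [newA_N hd.TC hbC]; exact hX _
      omega
    · have hb : b ∉ C := fun h => step_noenvy hv hI hd (himp a haj) h hab
      rw [newA_N hd.TC hb]
      exact hI.single a b (step_oldenvy hd (himp a haj) hb hab)
  · intro e he k hk
    rcases hue e he k hk with h | rfl
    · rintro ⟨x, hx⟩
      by_cases hxj : x = j
      · exact hue' e he k hk (hxj ▸ hx)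
      · exact step_noenvy hv hI hd (himp x hxj) h hx
    · exact hu0

lemma val_notgood_le (hv : ValidInstance M v) {x : V} {e : Sym2 V} (he : e ∈ M)
    (h : ¬ IsGoodFor (v x) M e) (S : Finset (Sym2 V)) (hS : S ⊆ M.erase e) :
    v x (insert e S) ≤ v x S := by
  rcases hv.2.1 x e he with h1 | h1 | h1
  · exact absurd h1 h
  · exact (h1 S hS).le
  · exact (h1 S hS).le

lemma exists_initial [Fintype V] (hv : ValidInstance M v) :
    ∃ X, EInv M v X ∧ ∀ k, (X k).card ≤ 1 := by
  have key : ∀ A : Finset V, ∃ X : V → Finset (Sym2 V),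
      (∀ i, ∀ e ∈ X i, e ∈ M ∧ i ∈ e ∧ IsGoodFor (v i) M e) ∧
      (∀ i j e, e ∈ X i → e ∈ X j → i = j) ∧ (∀ k, (X k).card ≤ 1) ∧
      (∀ i, i ∉ A → X i = ∅) ∧
      (∀ i ∈ A, ∀ e ∈ M, (∀ k, e ∉ X k) → v i {e} ≤ v i (X i)) := by
    intro A
    induction A using Finset.induction_on with
    | empty => exact ⟨fun _ => ∅, by simp, by simp, by simp, by simp, by simp⟩
    | insert a A ha ih =>
      obtain ⟨X, h1, h2, h3, h4, h5⟩ := ih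
      set S := M.filter (fun e => (∀ k, e ∉ X k) ∧ IsGoodFor (v a) M e) with hS
      by_cases hne : S.Nonempty
      · obtain ⟨g, hg, hmax⟩ := Finset.exists_max_image S (fun e => v a {e}) hne
        rw [hS, Finset.mem_filter] at hg
        obtain ⟨hgM, hgu, hgg⟩ := hg
        have hsub : ∀ k, k ≠ a → Function.update X a {g} k = X k := fun k hk => by simp [hk]
        have hself : Function.update X a {g} a = {g} := by simp
        have hun : ∀ e, (∀ k, e ∉ Function.update X a {g} k) → ∀ k, e ∉ X k := by
          intro e he k
          by_cases hk : k = a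
          · rw [hk, h4 a ha]; simp
          · have := he k; rwa [hsub k hk] at this
        refine ⟨Function.update X a {g}, ?_, ?_, ?_, ?_, ?_⟩
        · intro i e he
          by_cases hi : i = a
          · subst hi
            rw [hself, Finset.mem_singleton] at he
            subst he
            exact ⟨hgM, good_incident hv hgM hgg, hgg⟩
          · rw [hsub i hi] at he; exact h1 i e he
        · intro i j e hei hej
          by_cases hi : i = a <;> by_cases hj : j = a
          · rw [hi, hj]
          · subst hi
            rw [hself, Finset.mem_singleton] at hei
            rw [hsub j hj, hei] at hej
            exact absurd hej (hgu j)
          · subst hj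
            rw [hself, Finset.mem_singleton] at hej
            rw [hsub i hi, hej] at hei
            exact absurd hei (hgu i)
          · rw [hsub i hi] at hei; rw [hsub j hj] at hej
            exact h2 i j e hei hej
        · intro k
          by_cases hk : k = a
          · subst hk; rw [hself]; simp
          · rw [hsub k hk]; exact h3 k
        · intro i hi
          rw [Finset.mem_insert, not_or] at hi
          rw [hsub i hi.1]; exact h4 i hi.2
        · intro i hi e he hu
          by_cases hia : i = a
          · subst hia
            rw [hself]
            by_cases hgood : IsGoodFor (v i) M e
            · exact hmax e (by rw [hS, Finset.mem_filter]; exact ⟨he, hun e hu, hgood⟩)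
            · have q1 := val_notgood_le hv he hgood ∅ (by simp)
              have q2 := hgg ∅ (by simp)
              simp only [insert_empty_eq] at q1 q2
              linarith
          · rw [hsub i hia]
            exact h5 i ((Finset.mem_insert.1 hi).resolve_left hia) e he (hun e hu)
      · refine ⟨X, h1, h2, h3, fun i hi => h4 i (fun h => hi (Finset.mem_insert_of_mem h)), ?_⟩
        intro i hi e he hu
        rcases Finset.mem_insert.1 hi with rfl | hi
        · have hgood : ¬ IsGoodFor (v i) M e := fun hg =>
            hne ⟨e, by rw [hS, Finset.mem_filter]; exact ⟨he, hu, hg⟩⟩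
          have q1 := val_notgood_le hv he hgood ∅ (by simp)
          have q2 := val_empty_le h1 i
          simp only [insert_empty_eq] at q1
          linarith
        · exact h5 i hi e he hu
  obtain ⟨X, h1, h2, h3, _, h5⟩ := key Finset.univ
  refine ⟨X, ⟨h1, h2, fun e he hu x => h5 x (Finset.mem_univ x) e he hu, ?_⟩, h3⟩
  intro a b hab
  have := Finset.card_pos.2 ⟨_, envies_mem hv h1 hab⟩
  have := h3 b
  omega

/-- All agents from which some agent of `T` can be reached along the envy relation. -/
noncomputable def chain [Fintype V] (v : V → Finset (Sym2 V) → ℝ) (X : V → Finset (Sym2 V))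
    (T : Finset V) : Finset V :=
  Finset.univ.filter (fun c => ∃ t ∈ T, Relation.ReflTransGen (Envies v X) c t)

lemma mem_chain [Fintype V] {c : V} :
    c ∈ chain v X T ↔ ∃ t ∈ T, Relation.ReflTransGen (Envies v X) c t := by
  simp [chain]

lemma exists_p [Fintype V] (T : Finset V) : ∃ p : V → V, ∀ c ∈ chain v X T, c ∉ T →
    p c ∈ chain v X T ∧ Envies v X c (p c) := by
  have : ∀ c, ∃ d, c ∈ chain v X T → c ∉ T → d ∈ chain v X T ∧ Envies v X c d := by
    intro c
    by_cases h : c ∈ chain v X T ∧ c ∉ T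
    · obtain ⟨h1, h2⟩ := h
      obtain ⟨t, ht, hct⟩ := mem_chain.1 h1
      rcases Relation.ReflTransGen.cases_head hct with rfl | ⟨d, h3, h4⟩
      · exact absurd ht h2
      · exact ⟨d, fun _ _ => ⟨mem_chain.2 ⟨t, ht, h4⟩, h3⟩⟩
    · exact ⟨c, fun h1 h2 => absurd ⟨h1, h2⟩ h⟩
  choose p hp using this
  exact ⟨p, hp⟩

/-- No lossless improvement is available. -/
def Stuck [Fintype V] (M : Finset (Sym2 V)) (v : V → Finset (Sym2 V) → ℝ)
    (X : V → Finset (Sym2 V)) : Prop :=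
  ¬ ∃ Y, EInv M v Y ∧ UnivSafe v Y ∧ cnt v Y < cnt v X

lemma stuck_acyclic [Fintype V] (hv : ValidInstance M v) (hI : EInv M v X)
    (hs : Stuck M v X) (i : V) : ¬ Relation.TransGen (Envies v X) i i := by
  intro hi
  apply hs
  have : ∀ c, ∃ d, Relation.TransGen (Envies v X) c i →
      Relation.TransGen (Envies v X) d i ∧ Envies v X c d := by
    intro c
    by_cases h : Relation.TransGen (Envies v X) c i
    · rcases Relation.TransGen.head'_iff.1 h with ⟨d, h1, h2⟩
      refine ⟨d, fun _ => ⟨?_, h1⟩⟩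
      exact Relation.TransGen.trans_right h2 hi
    · exact ⟨c, fun h' => absurd h' h⟩
  choose p hp using this
  refine step_lossless (B := fun _ => ∅) (T := ∅) (N := ∅)
    (C := Finset.univ.filter (fun c => Relation.TransGen (Envies v X) c i)) (p := p) hv hI
    ⟨by simp, by simp, by simp, by simp, ?_, by simp, by simp⟩ (by simp) ⟨i, by simpa using hi, by simp⟩
  intro c hc _
  simp only [Finset.mem_filter, Finset.mem_univ, true_and] at hc ⊢
  exact hp c hc

lemma chain_progress [Fintype V] (hv : ValidInstance M v) (hI : EInv M v X)
    {r i : V} (hr : ¬ Envied v X r) (hri : Relation.TransGen (Envies v X) r i)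
    (S : Finset (Sym2 V)) (hS : ∀ e ∈ S, e ∈ M ∧ (e ∈ X r ∨ ∀ k, e ∉ X k))
    (hlt : v i (X i) < v i S) :
    ∃ Y, EInv M v Y ∧ UnivSafe v Y ∧ cnt v Y < cnt v X := by
  obtain ⟨p, hp⟩ := exists_p (v := v) (X := X) {i}
  have hrC : r ∈ chain v X {i} := mem_chain.2 ⟨i, by simp, hri.to_reflTransGen⟩
  obtain ⟨c, hc1, hc2⟩ := Relation.TransGen.tail'_iff.1 hri
  refine step_lossless (B := fun _ => S.filter (fun e => IsGoodFor (v i) M e)) (T := {i})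
    (N := {r}) (C := chain v X {i}) (p := p) hv hI
    ⟨?_, by simpa using hrC, by simp, by simpa using hr, hp, ?_, ?_⟩ ?_
    ⟨c, mem_chain.2 ⟨i, by simp, Relation.ReflTransGen.single hc2⟩, ?_⟩
  · intro t ht
    exact mem_chain.2 ⟨t, ht, Relation.ReflTransGen.refl⟩
  · intro t ht e he
    rw [Finset.mem_singleton] at ht
    subst ht
    rw [Finset.mem_filter] at he
    obtain ⟨h1, h2⟩ := hS e he.1
    refine ⟨h1, he.2, ?_, ?_⟩
    · intro x
      rcases h2 with h2 | h2
      · exact unenvied_edge hv hI.orient hr h2 x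
      · exact hI.unal e h1 h2 x
    · intro k hk hek
      rcases h2 with h2 | h2
      · exact hk (hI.disj _ _ _ h2 hek ▸ hrC)
      · exact h2 k hek
  · intro t ht t' ht' _ _ _
    rw [Finset.mem_singleton] at ht ht'
    rw [ht, ht']
  · intro t ht
    rw [Finset.mem_singleton] at ht
    subst ht
    exact hlt.le.trans (val_filter_ge hv S (fun e he => (hS e he).1))
  · rw [Finset.mem_singleton]
    exact envies_ne hc2

lemma root_exists [Fintype V] (hac : ∀ i, ¬ Relation.TransGen (Envies v X) i i) (i : V)
    (hi : Envied v X i) : ∃ r, ¬ Envied v X r ∧ Relation.TransGen (Envies v X) r i := by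
  haveI : Std.Irrefl (Relation.TransGen (Envies v X)) := ⟨hac⟩
  have wf : WellFounded (Relation.TransGen (Envies v X)) :=
    Finite.wellFounded_of_trans_of_irrefl _
  induction i using wf.induction with
  | _ i ih =>
    obtain ⟨j, hj⟩ := hi
    by_cases h : Envied v X j
    · obtain ⟨r, h1, h2⟩ := ih j (Relation.TransGen.single hj) h
      exact ⟨r, h1, h2.tail hj⟩
    · exact ⟨j, h, Relation.TransGen.single hj⟩

lemma root_unique (hv : ValidInstance M v) (hI : EInv M v X) {r r' i : V}
    (hr : ¬ Envied v X r) (hr' : ¬ Envied v X r')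
    (h : Relation.ReflTransGen (Envies v X) r i)
    (h' : Relation.ReflTransGen (Envies v X) r' i) : r = r' := by
  induction h with
  | refl =>
    rcases Relation.ReflTransGen.cases_tail h' with h | ⟨c, _, h⟩
    · exact h
    · exact absurd ⟨c, h⟩ hr
  | tail hb hbc ih =>
    rcases Relation.ReflTransGen.cases_tail h' with h | ⟨c, h1, h⟩
    · exact absurd ⟨_, h ▸ hbc⟩ hr'
    · rw [envies_unique hv hI h hbc] at h1
      exact ih h1

lemma mem_unalloc [Fintype V] {e : Sym2 V} :
    e ∈ Unallocated M X ↔ e ∈ M ∧ ∀ k, e ∉ X k := by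
  simp [Unallocated]

lemma mem_U [Fintype V] {i : V} {e : Sym2 V} (h : e ∈ EgeNonneg v M i ∩ Unallocated M X) :
    e ∈ M ∧ ∀ k, e ∉ X k :=
  mem_unalloc.1 (Finset.mem_inter.1 h).2

lemma stuck_two [Fintype V] (hv : ValidInstance M v) (hI : EInv M v X)
    (hs : Stuck M v X) (i : V) (hi : Envied v X i) :
    v i (EgeNonneg v M i ∩ Unallocated M X) ≤ v i (X i) := by
  by_contra hlt
  obtain ⟨r, h1, h2⟩ := root_exists (stuck_acyclic hv hI hs) i hi
  exact hs (chain_progress hv hI h1 h2 _ (fun e he => ⟨(mem_U he).1, Or.inr (mem_U he).2⟩)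
    (not_le.1 hlt))

lemma stuck_eight [Fintype V] (hv : ValidInstance M v) (hI : EInv M v X)
    (hs : Stuck M v X) (r i : V) (hr : ¬ Envied v X r)
    (hri : Relation.TransGen (Envies v X) r i) : SafeFor v M X r i := by
  by_contra hlt
  unfold SafeFor at hlt
  refine hs (chain_progress hv hI hr hri _ (fun e he => ?_) (not_le.1 hlt))
  rcases Finset.mem_union.1 he with h | h
  · exact ⟨(hI.orient r e h).1, Or.inl h⟩
  · exact ⟨(mem_U h).1, Or.inr (mem_U h).2⟩

lemma final_props [Fintype V] (hv : ValidInstance M v) (hI : EInv M v X)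
    (hs : Stuck M v X)
    (h3 : ∀ i j : V, Envied v X i → Envied v X j →
      ∃ k, ¬ Envied v X k ∧ SafeFor v M X k i ∧ SafeFor v M X k j) :
    IsPartialOrientation M X ∧ CondEnviedWeak v X ∧ CondOwnStrict v X ∧ Props M v X := by
  have hac := stuck_acyclic hv hI hs
  refine ⟨⟨fun i e he => (hI.orient i e he).1, ?_, fun i e he => (hI.orient i e he).2.1⟩,
    ?_, ?_, ?_, stuck_two hv hI hs, h3, ?_, fun i ⟨j, hj⟩ => hI.single j i hj, ?_, hac, ?_⟩
  · intro i j hij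
    rw [Finset.disjoint_left]
    exact fun e h1 h2 => hij (hI.disj i j e h1 h2)
  · intro i j hij e he _
    have hX := envies_eq hv hI hij
    rw [hX, Finset.mem_singleton] at he
    rw [hX, he, Finset.erase_singleton]
    exact val_empty_le hI.orient i
  · intro i j _ e he hlt
    exfalso
    have := (hI.orient i e he).2.2 ((X i).erase e)
      (Finset.erase_subset_erase e (fun f hf => (hI.orient i f hf).1))
    rw [Finset.insert_erase he] at this
    linarith
  · intro i e he
    exact hI.unal e (mem_U he).1 (mem_U he).2 i
  · intro i e he hch
    have q1 := (hI.orient i e he).2.2 ∅ (by simp)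
    have q2 := hch ∅ (by simp)
    linarith
  · rintro i ⟨j, hj⟩
    exact ⟨j, hj, fun k hk => envies_unique hv hI hk hj⟩
  · intro s f hs1 hf hroot l hl1 hls
    have htr : ∀ b, b ≤ s → ∀ a, a < b → Relation.TransGen (Envies v X) (f b) (f a) := by
      intro b
      induction b with
      | zero => intro _ a ha; omega
      | succ b ih =>
        intro hb a ha
        have h1 := hf (b + 1) (by omega) hb
        simp only [Nat.add_sub_cancel] at h1
        rcases Nat.lt_succ_iff_lt_or_eq.1 ha with h | h
        · exact Relation.TransGen.head h1 (ih (by omega) a h)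
        · rw [h]; exact Relation.TransGen.single h1
    rcases Nat.lt_or_eq_of_le hls with hlt | rfl
    · have hE := hf (l + 1) (by omega) (by omega)
      simp only [Nat.add_sub_cancel] at hE
      have hX := envies_eq hv hI hE
      have h0 : Envied v X (f 0) := ⟨f 1, by simpa using hf 1 le_rfl hs1⟩
      unfold SafeFor
      rw [Finset.union_comm, val_union_dummy hv]
      · exact stuck_two hv hI hs _ h0
      · exact fun e he => (mem_U he).1
      · intro e he
        refine ⟨(hI.orient _ e he).1, fun hmem => ?_⟩
        rw [hX, Finset.mem_singleton] at he
        subst he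
        rcases Sym2.mem_iff.1 hmem with h | h
        · have := htr (l + 1) (by omega) 0 (by omega)
          rw [h] at this; exact hac _ this
        · have := htr l hls 0 (by omega)
          rw [h] at this; exact hac _ this
    · exact stuck_eight hv hI hs _ _ hroot (htr l le_rfl 0 (by omega))

lemma univ_three [Fintype V] (hv : ValidInstance M v) (hI : EInv M v X)
    (hs : Stuck M v X) (hU : UnivSafe v X) (i j : V) (hi : Envied v X i) (hj : Envied v X j) :
    ∃ k, ¬ Envied v X k ∧ SafeFor v M X k i ∧ SafeFor v M X k j := by
  obtain ⟨u, hu, hue⟩ := hU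
  have : ∀ x, Envied v X x → SafeFor v M X u x := by
    intro x hx
    unfold SafeFor
    rw [Finset.union_comm, val_union_dummy hv]
    · exact stuck_two hv hI hs _ hx
    · exact fun e he => (mem_U he).1
    · exact fun e he => ⟨(hI.orient u e he).1, fun hm => hue e he x hm hx⟩
  exact ⟨u, hu, this i hi, this j hj⟩

/-- An unsafe unenvied agent holds exactly the joint edge, which is a good. -/
lemma unsafe_edge [Fintype V] (hv : ValidInstance M v) (hI : EInv M v X)
    (hs : Stuck M v X) (hX : ∀ k, (X k).card ≤ 1) {r j : V} (hr : ¬ Envied v X r)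
    (hj : Envied v X j) (hun : ¬ SafeFor v M X r j) :
    X r = {s(j, r)} ∧ IsGoodFor (v j) M s(j, r) := by
  have h2 := stuck_two hv hI hs j hj
  have hjr : j ≠ r := fun h => hr (h ▸ hj)
  unfold SafeFor at hun
  have hmem : s(j, r) ∈ X r := by
    by_contra hm
    apply hun
    rw [Finset.union_comm, val_star_not_mem hv hjr _ _ (fun e he => (mem_U he).1)
      (fun e he => ⟨(hI.orient r e he).1, (hI.orient r e he).2.1⟩) hm]
    exact h2
  have heq : X r = {s(j, r)} :=
    (Finset.eq_singleton_iff_unique_mem).2 ⟨hmem, fun e he => Finset.card_le_one.1 (hX r) e he _ hmem⟩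
  refine ⟨heq, ?_⟩
  by_contra hg
  apply hun
  have q := val_notgood_le hv (hI.orient r _ hmem).1 hg (EgeNonneg v M j ∩ Unallocated M X) (by
    intro e he
    rw [Finset.mem_erase]
    refine ⟨fun h => (mem_U he).2 r (h ▸ hmem), (mem_U he).1⟩)
  rw [heq, ← Finset.insert_eq]
  exact q.trans h2

lemma bad_pair [Fintype V] (hv : ValidInstance M v) (hI : EInv M v X)
    (hs : Stuck M v X) (hX : ∀ k, (X k).card ≤ 1) {i j : V} (hi : Envied v X i)
    (hj : Envied v X j)
    (hno : ¬ ∃ k, ¬ Envied v X k ∧ SafeFor v M X k i ∧ SafeFor v M X k j) :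
    ∃ Y, EInv M v Y ∧ UnivSafe v Y := by
  have hac := stuck_acyclic hv hI hs
  obtain ⟨ri, hri, hrii⟩ := root_exists hac i hi
  obtain ⟨rj, hrj, hrjj⟩ := root_exists hac j hj
  have sii := stuck_eight hv hI hs ri i hri hrii
  have sjj := stuck_eight hv hI hs rj j hrj hrjj
  have nij : ¬ SafeFor v M X ri j := fun h => hno ⟨ri, hri, sii, h⟩
  have nji : ¬ SafeFor v M X rj i := fun h => hno ⟨rj, hrj, h, sjj⟩
  have hij : i ≠ j := by rintro rfl; exact nij sii
  have hrr : ri ≠ rj := by rintro rfl; exact nij sjj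
  obtain ⟨Xri, gj⟩ := unsafe_edge hv hI hs hX hri hj nij
  obtain ⟨Xrj, gi⟩ := unsafe_edge hv hI hs hX hrj hi nji
  have hmri : s(j, ri) ∈ X ri := by rw [Xri]; simp
  have hmrj : s(i, rj) ∈ X rj := by rw [Xrj]; simp
  have hMri := (hI.orient _ _ hmri).1
  have hMrj := (hI.orient _ _ hmrj).1
  have hjrj : j ≠ rj := fun h => hrj (h ▸ hj)
  have hjri : j ≠ ri := fun h => hri (h ▸ hj)
  have hiri : i ≠ ri := fun h => hri (h ▸ hi)
  have hj0 : v j {s(i, rj)} = v j ∅ := val_nonincident hv hMrj (by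
    rw [Sym2.mem_iff]; rintro (h | h)
    · exact hij h.symm
    · exact hjrj h)
  have hj1 : v j ∅ < v j {s(j, ri)} := by simpa using gj ∅ (by simp)
  have hnoanc : ¬ Relation.ReflTransGen (Envies v X) ri j := fun h =>
    hrr (root_unique hv hI hri hrj h hrjj.to_reflTransGen)
  by_cases hcase : ∀ e ∈ Unallocated M X, v j {e} ≤ v j {s(j, ri)}
  · -- `i` takes everything, `j` takes the edge from `ri`
    obtain ⟨p, hp⟩ := exists_p (v := v) (X := X) {i, j}
    set S := X rj ∪ (EgeNonneg v M i ∩ Unallocated M X) with hS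
    have hSM : S ⊆ M := by
      intro e he
      rcases Finset.mem_union.1 he with h | h
      · exact (hI.orient _ e h).1
      · exact (mem_U h).1
    set B : V → Finset (Sym2 V) := fun c => if c = j then {s(j, ri)} else
      S.filter (fun e => IsGoodFor (v i) M e) with hB
    have Bj : B j = {s(j, ri)} := by simp [hB]
    have Bi : B i = S.filter (fun e => IsGoodFor (v i) M e) := by simp [hB, hij]
    have hriC : ri ∈ chain v X {i, j} := mem_chain.2 ⟨i, by simp, hrii.to_reflTransGen⟩
    have hrjC : rj ∈ chain v X {i, j} := mem_chain.2 ⟨j, by simp, hrjj.to_reflTransGen⟩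
    have hBij : ∀ e, e ∈ B i → e ∉ B j := by
      intro e h1 h2
      rw [Bi, Finset.mem_filter] at h1
      rw [Bj, Finset.mem_singleton] at h2
      subst h2
      rcases Finset.mem_union.1 h1.1 with h | h
      · exact hrr (hI.disj _ _ _ hmri h)
      · exact (mem_U h).2 _ hmri
    have hd : StepData M v X B {i, j} (chain v X {i, j}) {ri, rj} p := by
      refine ⟨?_, ?_, ?_, ?_, hp, ?_, ?_⟩
      · intro t ht
        exact mem_chain.2 ⟨t, ht, Relation.ReflTransGen.refl⟩
      · intro t ht
        rcases Finset.mem_insert.1 ht with rfl | ht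
        · exact hriC
        · rw [Finset.mem_singleton] at ht; rw [ht]; exact hrjC
      · rw [Finset.card_pair hij, Finset.card_pair hrr]
      · intro t ht
        rcases Finset.mem_insert.1 ht with rfl | ht
        · exact hri
        · rw [Finset.mem_singleton] at ht; rw [ht]; exact hrj
      · intro t ht e he
        rcases Finset.mem_insert.1 ht with rfl | ht
        · rw [Bi, Finset.mem_filter] at he
          refine ⟨hSM he.1, he.2, ?_, ?_⟩
          · intro x
            rcases Finset.mem_union.1 he.1 with h | h
            · exact unenvied_edge hv hI.orient hrj h x
            · exact hI.unal e (mem_U h).1 (mem_U h).2 x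
          · intro k hk hek
            rcases Finset.mem_union.1 he.1 with h | h
            · exact hk (hI.disj _ _ _ h hek ▸ hrjC)
            · exact (mem_U h).2 k hek
        · rw [Finset.mem_singleton] at ht
          subst ht
          rw [Bj, Finset.mem_singleton] at he
          subst he
          refine ⟨hMri, gj, fun x => unenvied_edge hv hI.orient hri hmri x, ?_⟩
          intro k hk hek
          exact hk (hI.disj _ _ _ hmri hek ▸ hriC)
      · intro t ht t' ht' e he he'
        simp only [Finset.mem_insert, Finset.mem_singleton] at ht ht'
        rcases ht with rfl | rfl <;> rcases ht' with rfl | rfl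
        · rfl
        · exact absurd he' (hBij e he)
        · exact absurd he (hBij e he')
        · rfl
    have hBle : v j (B i) ≤ v j (B j) := by
      rw [Bj]
      apply val_star_le hv hij.symm _ _ _ hj1.le
      · intro e he
        rw [Bi, Finset.mem_filter] at he
        rcases Finset.mem_union.1 he.1 with h | h
        · rw [Xrj, Finset.mem_singleton] at h
          rw [h, hj0]; exact hj1.le
        · exact hcase e (Finset.mem_inter.1 h).2
      · intro e he
        rw [Bi, Finset.mem_filter] at he
        exact ⟨hSM he.1, good_incident hv (hSM he.1) he.2⟩
    have hjT : j ∈ ({i, j} : Finset V) := by simp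
    have hiT : i ∈ ({i, j} : Finset V) := by simp
    have hriT : ri ∉ ({i, j} : Finset V) := by
      simp only [Finset.mem_insert, Finset.mem_singleton]
      rintro (h | h)
      · exact hiri h.symm
      · exact hjri h.symm
    have hYri := step_shift hv hI hd hriC hriT
    obtain ⟨hpC, hpE⟩ := hd.hp ri hriC hriT
    have hpj : p ri ≠ j := fun h => hnoanc (Relation.ReflTransGen.single (h ▸ hpE))
    have hor := step_orient hv hI hd
    have hu' : ¬ Envies v (newA X B {i, j} (chain v X {i, j}) p) j ri := by
      intro h
      have := envies_mem hv hor h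
      rw [hYri, Finset.mem_singleton, Sym2.eq_swap] at this
      exact hpj (Sym2.congr_right.1 this).symm
    have hu'' : ¬ Envies v (newA X B {i, j} (chain v X {i, j}) p) j (p ri) := by
      intro h
      by_cases hpi : p ri = i
      · rw [hpi] at h
        unfold Envies at h
        rw [newA_T hiT, newA_T hjT] at h
        linarith
      · have hpT : p ri ∉ ({i, j} : Finset V) := by simp [hpi, hpj]
        have := envies_mem hv hor h
        rw [step_shift hv hI hd hpC hpT, Finset.mem_singleton, Sym2.eq_swap] at this
        have h4 := (Sym2.congr_right.1 this)
        have h5 := (hd.hp _ hpC hpT).2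
        rw [← h4] at h5
        exact hnoanc ((Relation.ReflTransGen.single hpE).tail h5)
    refine ⟨_, step_lossy hv hI hd hX hjT ?_ ?_ (u := ri) (fun x _ h => hri ⟨x, h⟩) hu' ?_ ?_⟩
    · intro t ht htj
      simp only [Finset.mem_insert, Finset.mem_singleton] at ht
      rcases ht with rfl | rfl
      · refine ⟨?_, hBle⟩
        rw [Bi]
        unfold SafeFor at nji
        exact (not_le.1 nji).le.trans (val_filter_ge hv S hSM)
      · exact absurd rfl htj
    · intro e he hun
      rw [Bj]
      rcases step_unal' hv hI hd hun with h | ⟨n, hn, hen⟩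
      · exact hcase e (mem_unalloc.2 ⟨he, h⟩)
      · simp only [Finset.mem_insert, Finset.mem_singleton] at hn
        rcases hn with rfl | rfl
        · rw [Xri, Finset.mem_singleton] at hen; rw [hen]
        · rw [Xrj, Finset.mem_singleton] at hen; rw [hen, hj0]; exact hj1.le
    · intro e he k hk
      rw [hYri, Finset.mem_singleton] at he
      subst he
      rcases Sym2.mem_iff.1 hk with rfl | rfl
      · exact Or.inr rfl
      · exact Or.inl hpC
    · intro e he k hk
      rw [hYri, Finset.mem_singleton] at he
      subst he
      rcases Sym2.mem_iff.1 hk with rfl | rfl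
      · exact hu'
      · exact hu''
  · -- `j` takes her best unallocated edge
    push Not at hcase
    obtain ⟨e0, he0, hlt0⟩ := hcase
    obtain ⟨g, hg, hmax⟩ := Finset.exists_max_image (Unallocated M X) (fun e => v j {e}) ⟨e0, he0⟩
    have hglt : v j {s(j, ri)} < v j {g} := hlt0.trans_le (hmax e0 he0)
    obtain ⟨hgM, hgu⟩ := mem_unalloc.1 hg
    have hgg : IsGoodFor (v j) M g := by
      by_contra h
      have := val_notgood_le hv hgM h ∅ (by simp)
      rw [insert_empty_eq] at this
      linarith
    obtain ⟨p, hp⟩ := exists_p (v := v) (X := X) {j}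
    have hrjC : rj ∈ chain v X {j} := mem_chain.2 ⟨j, by simp, hrjj.to_reflTransGen⟩
    have hjC : j ∈ chain v X {j} := mem_chain.2 ⟨j, by simp, Relation.ReflTransGen.refl⟩
    have hriC : ri ∉ chain v X {j} := by
      intro h
      obtain ⟨t, ht, h1⟩ := mem_chain.1 h
      rw [Finset.mem_singleton] at ht
      subst ht
      exact hnoanc h1
    have hd : StepData M v X (fun _ => {g}) {j} (chain v X {j}) {rj} p := by
      refine ⟨by simpa using hjC, by simpa using hrjC, by simp, by simpa using hrj, hp, ?_, ?_⟩
      · intro t ht e he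
        rw [Finset.mem_singleton] at ht he
        subst ht he
        exact ⟨hgM, hgg, hI.unal e hgM hgu, fun k _ => hgu k⟩
      · intro t ht t' ht' _ _ _
        rw [Finset.mem_singleton] at ht ht'
        rw [ht, ht']
    have hjT : j ∈ ({j} : Finset V) := by simp
    have hu' : ¬ Envies v (newA X (fun _ => {g}) {j} (chain v X {j}) p) j ri := by
      intro h
      unfold Envies at h
      rw [newA_T hjT, newA_N hd.TC hriC, Xri] at h
      linarith
    refine ⟨_, step_lossy hv hI hd hX hjT ?_ ?_ (u := ri) (fun x _ h => hri ⟨x, h⟩) hu' ?_ ?_⟩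
    · intro t ht htj
      exact absurd (Finset.mem_singleton.1 ht) htj
    · intro e he hun
      rcases step_unal' hv hI hd hun with h | ⟨n, hn, hen⟩
      · exact hmax e (mem_unalloc.2 ⟨he, h⟩)
      · rw [Finset.mem_singleton] at hn
        subst hn
        rw [Xrj, Finset.mem_singleton] at hen
        rw [hen, hj0]; exact (hj1.trans hglt).le
    · intro e he k hk
      rw [newA_N hd.TC hriC, Xri, Finset.mem_singleton] at he
      subst he
      rcases Sym2.mem_iff.1 hk with rfl | rfl
      · exact Or.inl hjC
      · exact Or.inr rfl
    · intro e he k hk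
      rw [newA_N hd.TC hriC, Xri, Finset.mem_singleton] at he
      subst he
      rcases Sym2.mem_iff.1 hk with rfl | rfl
      · exact fun h => envies_ne h rfl
      · exact hu'

end Helpers

/-- For every mixed instance on a simple graph, there is a partial
orientation that is EFX⁰₋ and satisfies Properties (1)–(8). -/
theorem stmt13 {V : Type*} [Fintype V] [DecidableEq V]
    (M : Finset (Sym2 V)) (v : V → Finset (Sym2 V) → ℝ)
    (hvalid : ValidInstance M v) :
    ∃ X : V → Finset (Sym2 V),
      IsPartialOrientation M X ∧
      CondEnviedWeak v X ∧ CondOwnStrict v X ∧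
      Props M v X := by
  by_cases hU : ∃ Y, EInv M v Y ∧ UnivSafe v Y
  · have hex : ∃ n, ∃ Y, EInv M v Y ∧ UnivSafe v Y ∧ cnt v Y = n := by
      obtain ⟨Y, h1, h2⟩ := hU
      exact ⟨_, Y, h1, h2, rfl⟩
    obtain ⟨X, h1, h2, h3⟩ := Nat.find_spec hex
    have hs : Stuck M v X := by
      rintro ⟨Y, q1, q2, q3⟩
      exact Nat.find_min hex (h3 ▸ q3) ⟨Y, q1, q2, rfl⟩
    exact ⟨X, final_props hvalid h1 hs (univ_three hvalid h1 hs h2)⟩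
  · obtain ⟨X, hI, hX⟩ := exists_initial hvalid
    have hs : Stuck M v X := fun ⟨Y, q1, q2, _⟩ => hU ⟨Y, q1, q2⟩
    refine ⟨X, final_props hvalid hI hs ?_⟩
    intro i j hi hj
    by_contra hno
    exact hU (bad_pair hvalid hI hs hX hi hj hno)
end

section
/- For every mixed instance on a simple graph: if there exists a partial orientation (a partial allocation in which every allocated edge goes to one of its two endpoint agents) that is EFX^0_- and satisfies Properties (1)–(8), then there exists a complete allocation of all edges that is EFX^0_-. -/
open Finset

variable {V : Type*} [DecidableEq V]

open scoped Classical

/-! helpers -/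

section Helpers

variable {M : Finset (Sym2 V)}

lemma aux_up {v : Finset (Sym2 V) → ℝ}
    (hv : ∀ e ∈ M, IsGoodFor v M e ∨ IsChoreFor v M e ∨ IsDummyFor v M e)
    (S A : Finset (Sym2 V)) (hS : S ⊆ M) (hA : A ⊆ M)
    (h : ∀ e ∈ A, e ∉ S → ¬ IsChoreFor v M e) : v S ≤ v (S ∪ A) := by
  induction A using Finset.induction_on with
  | empty => simp
  | insert a A ha ih =>
    have h1 := ih (fun x hx => hA (mem_insert_of_mem hx))
      (fun e he => h e (mem_insert_of_mem he))
    rw [union_insert]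
    by_cases haS : a ∈ S
    · rw [insert_eq_of_mem (mem_union_left _ haS)]; exact h1
    · have hsub : S ∪ A ⊆ M.erase a := by
        intro x hx
        rw [mem_union] at hx
        refine mem_erase.2 ⟨?_, ?_⟩
        · rintro rfl; tauto
        · rcases hx with hx | hx
          · exact hS hx
          · exact hA (mem_insert_of_mem hx)
      rcases hv a (hA (mem_insert_self _ _)) with hg | hc | hd
      · exact h1.trans (hg _ hsub).le
      · exact absurd hc (h a (mem_insert_self _ _) haS)
      · exact h1.trans (hd _ hsub).ge

lemma aux_down {v : Finset (Sym2 V) → ℝ}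
    (hv : ∀ e ∈ M, IsGoodFor v M e ∨ IsChoreFor v M e ∨ IsDummyFor v M e)
    (S A : Finset (Sym2 V)) (hS : S ⊆ M) (hA : A ⊆ M)
    (h : ∀ e ∈ A, e ∉ S → ¬ IsGoodFor v M e) : v (S ∪ A) ≤ v S := by
  induction A using Finset.induction_on with
  | empty => simp
  | insert a A ha ih =>
    have h1 := ih (fun x hx => hA (mem_insert_of_mem hx))
      (fun e he => h e (mem_insert_of_mem he))
    rw [union_insert]
    by_cases haS : a ∈ S
    · rw [insert_eq_of_mem (mem_union_left _ haS)]; exact h1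
    · have hsub : S ∪ A ⊆ M.erase a := by
        intro x hx
        rw [mem_union] at hx
        refine mem_erase.2 ⟨?_, ?_⟩
        · rintro rfl; tauto
        · rcases hx with hx | hx
          · exact hS hx
          · exact hA (mem_insert_of_mem hx)
      rcases hv a (hA (mem_insert_self _ _)) with hg | hc | hd
      · exact absurd hg (h a (mem_insert_self _ _) haS)
      · exact (hc _ hsub).le.trans h1
      · exact (hd _ hsub).le.trans h1

lemma aux_mono {v : Finset (Sym2 V) → ℝ}
    (hv : ∀ e ∈ M, IsGoodFor v M e ∨ IsChoreFor v M e ∨ IsDummyFor v M e)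
    (S T : Finset (Sym2 V)) (hS : S ⊆ M) (hT : T ⊆ M)
    (h1 : ∀ e ∈ S, e ∉ T → ¬ IsGoodFor v M e)
    (h2 : ∀ e ∈ T, e ∉ S → ¬ IsChoreFor v M e) : v S ≤ v T := by
  have a := aux_up hv S T hS hT h2
  have b := aux_down hv T S hT hS h1
  rw [union_comm] at b
  exact a.trans b

lemma aux_chore_not_good {v : Finset (Sym2 V) → ℝ} {e : Sym2 V}
    (h : IsChoreFor v M e) : ¬ IsGoodFor v M e := fun g =>
  lt_asymm (g ∅ (empty_subset _)) (h ∅ (empty_subset _))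

lemma aux_dummy_not_good {v : Finset (Sym2 V) → ℝ} {e : Sym2 V}
    (h : IsDummyFor v M e) : ¬ IsGoodFor v M e := fun g =>
  absurd (h ∅ (empty_subset _)) (g ∅ (empty_subset _)).ne'

lemma aux_dummy_not_chore {v : Finset (Sym2 V) → ℝ} {e : Sym2 V}
    (h : IsDummyFor v M e) : ¬ IsChoreFor v M e := fun g =>
  absurd (h ∅ (empty_subset _)) (g ∅ (empty_subset _)).ne

/-- Every agent is the start of an envy chain ending in a non-envied agent. -/
lemma aux_chain [Fintype V] {v : V → Finset (Sym2 V) → ℝ} {X : V → Finset (Sym2 V)}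
    (h7 : ∀ i : V, ¬ Relation.TransGen (Envies v X) i i) (i : V) :
    ∃ (s : ℕ) (f : ℕ → V), f 0 = i ∧
      (∀ l, 1 ≤ l → l ≤ s → Envies v X (f l) (f (l - 1))) ∧ ¬ Envied v X (f s) := by
  have hwf : WellFounded (Relation.TransGen (Envies v X)) := by
    haveI : Std.Irrefl (Relation.TransGen (Envies v X)) := ⟨h7⟩
    exact Finite.wellFounded_of_trans_of_irrefl _
  induction i using hwf.induction with
  | _ i ih =>
    by_cases hi : Envied v X i
    · obtain ⟨j, hj⟩ := hi
      obtain ⟨s, f, h0, hf, hs⟩ := ih j (Relation.TransGen.single hj)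
      refine ⟨s + 1, fun n => Nat.casesOn n i f, rfl, ?_, hs⟩
      intro l hl hls
      obtain ⟨m, rfl⟩ : ∃ m, l = m + 1 := ⟨l - 1, by omega⟩
      rcases m with _ | m
      · simpa [h0] using hj
      · have := hf (m + 1) (by omega) (by omega)
        simpa using this
    · exact ⟨0, fun _ => i, rfl, by intro l h1 h2; omega, hi⟩

/-- `k` is a suitable recipient for the unallocated edge `e`. -/
def aux_Rec [Fintype V] (M : Finset (Sym2 V)) (v : V → Finset (Sym2 V) → ℝ)
    (X : V → Finset (Sym2 V)) (e : Sym2 V) (k : V) : Prop :=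
  ¬ IsChoreFor (v k) M e ∧
  (∀ i ∈ e, ¬ IsChoreFor (v i) M e → i ≠ k → SafeFor v M X k i ∨ k ∈ e) ∧
  (∀ j, Envies v X j k → IsChoreFor (v j) M e)

lemma aux_envy_edge [Fintype V] {v : V → Finset (Sym2 V) → ℝ} {X : V → Finset (Sym2 V)}
    (hvalid : ValidInstance M v) (hX : IsPartialOrientation M X)
    (h4 : ∀ i : V, ∀ e ∈ X i, ¬ IsChoreFor (v i) M e) {i j : V} (h : Envies v X i j) :
    s(i, j) ∈ X j := by
  by_contra hn
  have hne : i ≠ j := by rintro rfl; exact lt_irrefl _ h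
  have h1 : v i ∅ ≤ v i (X i) := aux_mono (hvalid.2.1 i) _ _ (empty_subset _) (hX.1 i)
    (by simp) (fun e he _ => h4 i e he)
  have h2 : v i (X j) ≤ v i ∅ := by
    refine aux_mono (hvalid.2.1 i) _ _ (hX.1 j) (empty_subset _) ?_ (by simp)
    intro e he _
    apply aux_dummy_not_good
    apply hvalid.2.2 i e (hX.1 j he)
    intro hie
    have : e = s(i, j) := (Sym2.mem_and_mem_iff hne).1 ⟨hie, hX.2.2 j e he⟩
    exact hn (this ▸ he)
  exact absurd h (not_lt.2 (h2.trans h1))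

/-- Mixed case: chore for `j`, non-chore for the envied agent `i`. -/
lemma aux_mixed [Fintype V] {v : V → Finset (Sym2 V) → ℝ} {X : V → Finset (Sym2 V)}
    (hvalid : ValidInstance M v) (hX : IsPartialOrientation M X) (hP : Props M v X)
    {i j : V} (he : s(i, j) ∈ Unallocated M X)
    (hi : Envied v X i) (hj : IsChoreFor (v j) M s(i, j)) :
    ∃ k, aux_Rec M v X s(i, j) k := by
  obtain ⟨p1, p2, p3, p4, p5, p6, p7, p8⟩ := hP
  have heM : s(i, j) ∈ M := (mem_sdiff.1 he).1
  have hun : ∀ k, s(i, j) ∉ X k := fun k hk =>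
    (mem_sdiff.1 he).2 (mem_biUnion.2 ⟨k, mem_univ _, hk⟩)
  obtain ⟨s, f, h0, hf, hs⟩ := aux_chain p7 i
  have hs1 : 1 ≤ s := by
    rcases s with _ | s
    · exact absurd (h0 ▸ hi) hs
    · omega
  have hsafe := p8 s f hs1 hf hs
  rw [h0] at hsafe
  by_cases hr : f s = j
  · -- give to the child of the root
    have hs2 : 2 ≤ s := by
      by_contra hlt
      have : s = 1 := by omega
      subst this
      have h := hf 1 le_rfl le_rfl
      rw [hr] at h
      simp only [Nat.sub_self, h0] at h
      have := aux_envy_edge hvalid hX p4 h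
      rw [Sym2.eq_swap] at this
      exact hun _ this
    have henv := hf s hs1 le_rfl
    rw [hr] at henv
    have hkj : f (s - 1) ≠ j := by
      intro h; rw [h] at henv; exact lt_irrefl _ henv
    have hki : f (s - 1) ≠ i := by
      intro h; rw [h] at henv
      have := aux_envy_edge hvalid hX p4 henv
      rw [Sym2.eq_swap] at this
      exact hun _ this
    refine ⟨f (s - 1), ?_, ?_, ?_⟩
    · apply aux_dummy_not_chore
      apply hvalid.2.2 _ _ heM
      simp [hki, hkj]
    · intro a ha hac _
      rcases Sym2.mem_iff.1 ha with rfl | rfl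
      · exact Or.inl (hsafe (s - 1) (by omega) (by omega))
      · exact absurd hj hac
    · intro a ha
      have := (p6 _ ⟨j, henv⟩).unique ha henv
      rw [this]; exact hj
  · have hki : f s ≠ i := by rintro h; exact hs (h ▸ hi)
    refine ⟨f s, ?_, ?_, ?_⟩
    · apply aux_dummy_not_chore
      apply hvalid.2.2 _ _ heM
      simp [hki, hr]
    · intro a ha hac _
      rcases Sym2.mem_iff.1 ha with rfl | rfl
      · exact Or.inl (hsafe s hs1 le_rfl)
      · exact absurd hj hac
    · intro a ha
      exact absurd ⟨a, ha⟩ hs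

lemma aux_exists_rec [Fintype V] {v : V → Finset (Sym2 V) → ℝ} {X : V → Finset (Sym2 V)}
    (hvalid : ValidInstance M v) (hX : IsPartialOrientation M X) (hP : Props M v X)
    {e : Sym2 V} (he : e ∈ Unallocated M X) :
    (∃ k, aux_Rec M v X e k) ∨ ∀ k, k ∈ e := by
  have hP' := hP
  obtain ⟨p1, p2, p3, p4, p5, p6, p7, p8⟩ := hP'
  have heM : e ∈ M := (mem_sdiff.1 he).1
  have hun : ∀ k, e ∉ X k := fun k hk =>
    (mem_sdiff.1 he).2 (mem_biUnion.2 ⟨k, mem_univ _, hk⟩)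
  by_cases hA : ∃ i ∈ e, ¬ Envied v X i ∧ ¬ IsChoreFor (v i) M e
  · obtain ⟨i, hie, hi, hc⟩ := hA
    exact Or.inl ⟨i, hc, fun _ _ _ _ => Or.inr hie, fun j hj => absurd ⟨j, hj⟩ hi⟩
  push Not at hA
  by_cases hall : ∀ i ∈ e, IsChoreFor (v i) M e
  · -- chore for both endpoints
    by_cases hk : ∃ k, k ∉ e ∧ ¬ Envied v X k
    · obtain ⟨k, hke, hk⟩ := hk
      exact Or.inl ⟨k, aux_dummy_not_chore (hvalid.2.2 k e heM hke),
        fun i hi hc _ => absurd (hall i hi) hc, fun j hj => absurd ⟨j, hj⟩ hk⟩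
    push Not at hk
    by_cases hr : ∃ r t, ¬ Envied v X r ∧ Envies v X r t
    · obtain ⟨r, t, hr, hrt⟩ := hr
      have hre : r ∈ e := by
        by_contra h; exact hr (hk r h)
      have hne : r ≠ t := by rintro rfl; exact lt_irrefl _ hrt
      have hte : t ∉ e := by
        intro hte
        have : e = s(r, t) := (Sym2.mem_and_mem_iff hne).1 ⟨hre, hte⟩
        have h := aux_envy_edge hvalid hX p4 hrt
        rw [← this] at h
        exact hun _ h
      refine Or.inl ⟨t, aux_dummy_not_chore (hvalid.2.2 t e heM hte),
        fun i hi hc _ => absurd (hall i hi) hc, fun j hj => ?_⟩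
      rw [(p6 _ ⟨r, hrt⟩).unique hj hrt]
      exact hall r hre
    · push Not at hr
      right
      intro k
      by_contra hke
      obtain ⟨s, f, h0, hf, hs⟩ := aux_chain p7 k
      rcases s with _ | s
      · exact hs (h0 ▸ hk k hke)
      · exact hr _ _ hs (hf (s + 1) (by omega) le_rfl)
  · left
    push Not at hall
    obtain ⟨i, hie, hi⟩ := hall
    have hienv : Envied v X i := by
      by_contra h; exact hi (hA i hie h)
    obtain ⟨j, rfl⟩ := Sym2.mem_iff_exists.1 hie
    by_cases hj : IsChoreFor (v j) M s(i, j)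
    · exact aux_mixed hvalid hX hP he hienv hj
    · have hjenv : Envied v X j := by
        by_contra h; exact hj (hA j (Sym2.mem_mk_right _ _) h)
      obtain ⟨k, hk, hki, hkj⟩ := p3 i j hienv hjenv
      refine ⟨k, ?_, ?_, fun j hj => absurd ⟨j, hj⟩ hk⟩
      · apply aux_dummy_not_chore
        apply hvalid.2.2 _ _ heM
        rw [Sym2.mem_iff]
        rintro (rfl | rfl) <;> exact hk (by assumption)
      · intro a ha _ _
        rcases Sym2.mem_iff.1 ha with rfl | rfl
        · exact Or.inl hki
        · exact Or.inl hkj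

lemma aux_special {v : V → Finset (Sym2 V) → ℝ}
    (hvalid : ValidInstance M v) {e : Sym2 V} (heM : e ∈ M) (hall : ∀ k, k ∈ e) :
    ∃ X : V → Finset (Sym2 V),
      IsAllocation M X ∧ CondEnviedWeak v X ∧ CondOwnStrict v X := by
  have hone : ∀ e' ∈ M, e' = e := by
    intro e' he'
    have hd := hvalid.1 e' he'
    induction e' using Sym2.ind with
    | _ a b =>
      have hab : a ≠ b := by simpa using hd
      exact ((Sym2.mem_and_mem_iff hab).1 ⟨hall a, hall b⟩).symm
  obtain ⟨i, hi⟩ : ∃ i, i ∈ e := ⟨e.out.1, Sym2.out_fst_mem e⟩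
  refine ⟨fun k => if k = i then {e} else ∅, ⟨?_, ?_⟩, ?_, ?_⟩
  · intro k
    dsimp only
    split_ifs
    · simpa using heM
    · simp
  · intro e' he'
    rw [hone e' he']
    refine ⟨i, by simp, ?_⟩
    intro y hy
    by_contra hne
    simp [hne] at hy
  · intro a b hab x hx _
    by_cases hb : b = i
    · subst hb
      have ha : a ≠ b := by rintro rfl; exact lt_irrefl _ hab
      simp only [if_true, mem_singleton] at hx
      simp [ha, hx]
    · simp [hb] at hx
  · intro a b hab x hx _
    by_cases ha : a = i
    · subst ha
      have hb : b ≠ a := by rintro rfl; exact lt_irrefl _ hab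
      simp only [if_true, mem_singleton] at hx
      simp [hb, hx]
    · simp [ha] at hx

lemma aux_main [Fintype V] {v : V → Finset (Sym2 V) → ℝ} {X : V → Finset (Sym2 V)}
    (hvalid : ValidInstance M v) (hX : IsPartialOrientation M X) (hP : Props M v X)
    (hrec : ∀ e ∈ Unallocated M X, ∃ k, aux_Rec M v X e k) :
    ∃ X : V → Finset (Sym2 V),
      IsAllocation M X ∧ CondEnviedWeak v X ∧ CondOwnStrict v X := by
  obtain ⟨p1, p2, p3, p4, p5, p6, p7, p8⟩ := hP
  have hex : ∀ e, ∃ k, e ∈ Unallocated M X → aux_Rec M v X e k := by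
    intro e
    by_cases he : e ∈ Unallocated M X
    · obtain ⟨k, hk⟩ := hrec e he
      exact ⟨k, fun _ => hk⟩
    · exact ⟨e.out.1, fun h => absurd h he⟩
  choose r hr using hex
  have hR : ∀ e, e ∈ Unallocated M X ↔ e ∈ M ∧ ∀ k, e ∉ X k := by
    intro e; simp [Unallocated]
  obtain ⟨Y, hY⟩ : ∃ Y : V → Finset (Sym2 V), ∀ k e,
      e ∈ Y k ↔ e ∈ X k ∨ (e ∈ Unallocated M X ∧ r e = k) :=
    ⟨fun k => X k ∪ (Unallocated M X).filter (fun e => r e = k), by intro k e; simp⟩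
  have hYM : ∀ k, Y k ⊆ M := by
    intro k e he
    rcases (hY k e).1 he with h | h
    · exact hX.1 k h
    · exact ((hR e).1 h.1).1
  have hXY : ∀ k, X k ⊆ Y k := fun k e he => (hY k e).2 (Or.inl he)
  have hYc : ∀ k, ∀ e ∈ Y k, ¬ IsChoreFor (v k) M e := by
    intro k e he
    rcases (hY k e).1 he with h | ⟨h, rfl⟩
    · exact p4 k e h
    · exact (hr e h).1
  have hup : ∀ k, v k (X k) ≤ v k (Y k) := fun k =>
    aux_mono (hvalid.2.1 k) _ _ (hX.1 k) (hYM k) (fun e he h => absurd (hXY k he) h)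
      (fun e he _ => hYc k e he)
  have hemp : ∀ k, v k ∅ ≤ v k (Y k) := fun k =>
    aux_mono (hvalid.2.1 k) _ _ (empty_subset _) (hYM k) (by simp)
      (fun e he _ => hYc k e he)
  have hEge : ∀ i e, e ∈ M → i ∈ e → ¬ IsChoreFor (v i) M e → e ∈ EgeNonneg v M i := by
    intro i e heM hie hc
    refine mem_filter.2 ⟨heM, hie, ?_⟩
    rcases hvalid.2.1 i e heM with h | h | h
    · exact Or.inl h
    · exact absurd h hc
    · exact Or.inr h
  have hEge2 : ∀ i e, e ∈ EgeNonneg v M i → ¬ IsChoreFor (v i) M e := by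
    intro i e he
    rcases (mem_filter.1 he).2.2 with h | h
    · exact fun hc => aux_chore_not_good hc h
    · exact aux_dummy_not_chore h
  -- no new envy
  have hno : ∀ i k, ¬ Envies v X i k → i ≠ k → v i (Y k) ≤ v i (Y i) := by
    intro i k hik hne
    refine le_trans ?_ (hup i)
    by_cases hsafe : SafeFor v M X k i
    · refine le_trans ?_ hsafe
      refine aux_mono (hvalid.2.1 i) _ _ (hYM k) ?_ ?_ ?_
      · apply union_subset (hX.1 k)
        exact inter_subset_left.trans (filter_subset _ _)
      · intro e he hn hg
        rw [mem_union, mem_inter] at hn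
        rcases (hY k e).1 he with h | ⟨h, _⟩
        · exact hn (Or.inl h)
        · refine hn (Or.inr ⟨hEge i e (hYM k he) ?_ fun hc => aux_chore_not_good hc hg, h⟩)
          by_contra hie
          exact aux_dummy_not_good (hvalid.2.2 i e (hYM k he) hie) hg
      · intro e he hn
        rw [mem_union, mem_inter] at he
        rcases he with h | h
        · exact absurd (hXY k h) hn
        · exact hEge2 i e h.1
    · -- any new edge that is a good for `i` is the edge `s(i, k)`
      have hnew : ∀ e ∈ Unallocated M X, r e = k → IsGoodFor (v i) M e → e = s(i, k) := by
        rintro e he hrk hg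
        have h2 := (hr e he).2.1
        rw [hrk] at h2
        have heM := ((hR e).1 he).1
        have hie : i ∈ e := by
          by_contra hie
          exact aux_dummy_not_good (hvalid.2.2 i e heM hie) hg
        rcases h2 i hie (fun hc => aux_chore_not_good hc hg) hne with h | h
        · exact absurd h hsafe
        · exact (Sym2.mem_and_mem_iff hne).1 ⟨hie, h⟩
      by_cases hex : ∃ e ∈ Unallocated M X, r e = k ∧ IsGoodFor (v i) M e
      · obtain ⟨e, he, hrk, hg⟩ := hex
        have hek := hnew e he hrk hg
        have heM := ((hR e).1 he).1
        have hnc : ¬ IsChoreFor (v i) M e := fun hc => aux_chore_not_good hc hg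
        have h1 := p1 i e (mem_inter.2 ⟨hEge i e heM (by rw [hek]; simp) hnc, he⟩)
        refine le_trans ?_ h1
        refine aux_mono (hvalid.2.1 i) _ _ (hYM k) (by simpa using heM) ?_ ?_
        · intro x hx hxe hxg
          rw [mem_singleton] at hxe
          rcases (hY k x).1 hx with h | ⟨h, h'⟩
          · have hix : i ∈ x := by
              by_contra hix
              exact aux_dummy_not_good (hvalid.2.2 i x (hYM k hx) hix) hxg
            have := (Sym2.mem_and_mem_iff hne).1 ⟨hix, hX.2.2 k x h⟩
            exact hxe (this.trans hek.symm)
          · exact hxe ((hnew x h h' hxg).trans hek.symm)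
        · intro x hx _
          rw [mem_singleton] at hx
          rw [hx]; exact hnc
      · refine le_trans ?_ (not_lt.1 hik)
        refine aux_mono (hvalid.2.1 i) _ _ (hYM k) (hX.1 k) ?_ ?_
        · intro x hx hxn hxg
          rcases (hY k x).1 hx with h | ⟨h, h'⟩
          · exact hxn h
          · exact hex ⟨x, h, h', hxg⟩
        · intro x hx hxn
          exact absurd (hXY k hx) hxn
  refine ⟨Y, ⟨hYM, ?_⟩, ?_, ?_⟩
  · intro e heM
    by_cases he : e ∈ Unallocated M X
    · refine ⟨r e, (hY _ _).2 (Or.inr ⟨he, rfl⟩), ?_⟩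
      intro y hy
      rcases (hY y e).1 hy with h | h
      · exact absurd h (((hR e).1 he).2 y)
      · exact h.2.symm
    · have : ∃ k, e ∈ X k := by
        by_contra hcon
        push Not at hcon
        exact he ((hR e).2 ⟨heM, hcon⟩)
      obtain ⟨k, hk⟩ := this
      refine ⟨k, hXY k hk, ?_⟩
      intro y hy
      rcases (hY y e).1 hy with h | h
      · by_contra hne
        exact disjoint_left.1 (hX.2.1 y k hne) h hk
      · exact absurd h.1 he
  · intro i k hik e he hle
    have hne : i ≠ k := by rintro rfl; exact lt_irrefl _ hik
    by_cases hX' : Envies v X i k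
    · have hcard := p5 k ⟨i, hX'⟩
      obtain ⟨f, hf⟩ := card_eq_one.1 hcard
      have hch : ∀ x ∈ Y k, x ∉ X k → IsChoreFor (v i) M x := by
        intro x hx hxn
        rcases (hY k x).1 hx with h | ⟨h, h'⟩
        · exact absurd h hxn
        · have h3 := (hr x h).2.2
          rw [h'] at h3
          exact h3 i hX'
      have heX : e ∈ X k := by
        by_contra hn
        have hc := hch e he hn ((Y k).erase e) (erase_subset_erase _ (hYM k))
        rw [insert_erase he] at hc
        exact absurd hle (not_le.2 hc)
      refine le_trans ?_ (hemp i)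
      refine aux_mono (hvalid.2.1 i) _ _ ((erase_subset _ _).trans (hYM k))
        (empty_subset _) ?_ (by simp)
      intro x hx _
      rw [mem_erase] at hx
      apply aux_chore_not_good
      apply hch x hx.2
      rw [hf, mem_singleton] at heX ⊢
      rw [← heX]; exact hx.1
    · exact absurd hik (not_lt.2 (hno i k hX' hne))
  · intro i k hik e he hlt
    exfalso
    have hnc := hYc i e he
    have hsub : (Y i).erase e ⊆ M.erase e := erase_subset_erase _ (hYM i)
    rcases hvalid.2.1 i e (hYM i he) with h | h | h
    · have := h _ hsub
      rw [insert_erase he] at this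
      exact lt_asymm this hlt
    · exact hnc h
    · have := h _ hsub
      rw [insert_erase he] at this
      exact absurd this hlt.ne

end Helpers

/-- For every mixed instance on a simple graph: if there is a partial
orientation that is EFX⁰₋ and satisfies Properties (1)–(8), then there is a complete
allocation of all edges that is EFX⁰₋. -/
theorem stmt14 {V : Type*} [Fintype V] [DecidableEq V]
    (M : Finset (Sym2 V)) (v : V → Finset (Sym2 V) → ℝ)
    (hvalid : ValidInstance M v)
    (hpart : ∃ Xp : V → Finset (Sym2 V),
        IsPartialOrientation M Xp ∧
        CondEnviedWeak v Xp ∧ CondOwnStrict v Xp ∧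
        Props M v Xp) :
    ∃ X : V → Finset (Sym2 V),
      IsAllocation M X ∧ CondEnviedWeak v X ∧ CondOwnStrict v X := by
  obtain ⟨X, hX, -, -, hP⟩ := hpart
  by_cases hrec : ∀ e ∈ Unallocated M X, ∃ k, aux_Rec M v X e k
  · exact aux_main hvalid hX hP hrec
  · push Not at hrec
    obtain ⟨e, he, hno⟩ := hrec
    rcases aux_exists_rec hvalid hX hP he with ⟨k, hk⟩ | hall
    · exact absurd hk (hno k)
    · exact aux_special hvalid (mem_sdiff.1 he).1 hall
end

section
/- Consider a mixed instance on a star graph (one center agent adjacent to all other agents, the satellites) with at least two edges. If an edge e is a chore for its satellite endpoint agent, then in every EFX^0_- orientation (and hence in every EFX^0_0 orientation) the edge e is allocated to the center agent. -/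
open Finset

variable {V : Type*} [DecidableEq V]

/-- On a star with center `c` and at least two edges, if an edge is a
chore for its satellite endpoint, then in every EFX⁰₋ orientation (hence in every
EFX⁰₀ orientation) that edge is allocated to the center. -/
theorem stmt16 {V : Type*} [DecidableEq V]
    (c : V) (M : Finset (Sym2 V)) (v : V → Finset (Sym2 V) → ℝ)
    (hvalid : ValidInstance M v)
    (hstar : ∀ e ∈ M, c ∈ e)
    (hcard : 2 ≤ M.card)
    (e : Sym2 V) (he : e ∈ M)
    (a : V) (ha : a ∈ e) (hac : a ≠ c)
    (hchore : IsChoreFor (v a) M e) :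
    ∀ X : V → Finset (Sym2 V), IsAllocation M X → IsOrientation X →
      ((CondEnviedWeak v X ∧ CondOwnStrict v X) → e ∈ X c) ∧
      ((CondEnviedWeak v X ∧ CondOwnWeak v X) → e ∈ X c) := by
  intro X hX hO
  obtain ⟨hdiag, _, hdum⟩ := hvalid
  have key : CondEnviedWeak v X → e ∈ X c := by
    intro hW
    have hval : ∀ S : Finset (Sym2 V), S ⊆ M → (∀ g ∈ S, a ∉ g) → v a S = v a ∅ := by
      intro S
      induction S using Finset.induction_on with
      | empty => intros; rfl
      | insert g S hg ih =>
        intro hS hn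
        rw [hdum a g (hS (mem_insert_self g S)) (hn g (mem_insert_self g S)) S ?_]
        · exact ih (fun x hx => hS (mem_insert_of_mem hx)) (fun x hx => hn x (mem_insert_of_mem hx))
        · intro x hx
          exact mem_erase.2 ⟨fun h => hg (h ▸ hx), hS (mem_insert_of_mem hx)⟩
    have huniq : ∀ g ∈ M, a ∈ g → g = e := by
      intro g hg hag
      rw [(Sym2.mem_and_mem_iff hac).1 ⟨hag, hstar g hg⟩,
        (Sym2.mem_and_mem_iff hac).1 ⟨ha, hstar e he⟩]
    by_contra hec
    obtain ⟨i, hi, hiu⟩ := hX.2 e he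
    have hee := (Sym2.mem_and_mem_iff hac).1 ⟨ha, hstar e he⟩
    have hie := hO i e hi
    rw [hee, Sym2.mem_iff] at hie
    have hia : i = a := by
      rcases hie with h | h
      · exact h
      · exact absurd (h ▸ hi) hec
    subst hia
    have hXa : X i = {e} := by
      ext g
      rw [mem_singleton]
      exact ⟨fun hg => huniq g (hX.1 i hg) (hO i g hg), fun h => h ▸ hi⟩
    obtain ⟨f, hf, hfe⟩ := Finset.exists_mem_ne (by omega : 1 < M.card) e
    obtain ⟨j, hj, _⟩ := hX.2 f hf
    have hXj : ∀ g ∈ X j, i ∉ g := by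
      intro g hg hig
      have hge := huniq g (hX.1 j hg) hig
      have hji : j = i := hiu j (hge ▸ hg)
      rw [hji, hXa, mem_singleton] at hj
      exact hfe hj
    have h1 := hval (X j) (hX.1 j) hXj
    have h2 := hval ((X j).erase f) ((erase_subset _ _).trans (hX.1 j))
      (fun g hg => hXj g (mem_of_mem_erase hg))
    have h3 : v i {e} < v i ∅ := by simpa using hchore ∅ (empty_subset _)
    have h4 := hW i j (by unfold Envies; rw [hXa, h1]; exact h3) f hj (by rw [h1, h2])
    rw [h2, hXa] at h4
    linarith
  exact ⟨fun h => key h.1, fun h => key h.1⟩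
end

section
/- Consider the instance with four agents a, b_1, b_2, b_3 and four edges (a, b_1), (b_1, b_2), (b_2, b_3), (b_1, b_3), with additive valuations in which every edge has value −1 to both of its endpoint agents and value 0 to all other agents (so every edge is a chore for both endpoints). Then in every EFX^+_- orientation of this graph, the edge (a, b_1) is allocated to agent a. -/
open Finset

variable {V : Type*} [DecidableEq V]

/-- The edges of the gadget: `(a, b₁), (b₁, b₂), (b₂, b₃), (b₁, b₃)`, where
`a = 0`, `b₁ = 1`, `b₂ = 2`, `b₃ = 3`. -/
def gadgetEdges : Finset (Sym2 (Fin 4)) := {s(0, 1), s(1, 2), s(2, 3), s(1, 3)}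

/-- In the gadget where every edge is worth `-1` to both of its
endpoint agents and `0` to the others, every EFX⁺₋ orientation allocates the edge
`(a, b₁)` to agent `a`. -/
theorem stmt17 (v : Fin 4 → Finset (Sym2 (Fin 4)) → ℝ)
    (hv : ∀ (i : Fin 4) (S : Finset (Sym2 (Fin 4))),
      v i S = ∑ e ∈ S, (if i ∈ e ∧ e ∈ gadgetEdges then (-1 : ℝ) else 0)) :
    ∀ X : Fin 4 → Finset (Sym2 (Fin 4)),
      IsAllocation gadgetEdges X → IsOrientation X →
        (CondEnviedStrict v X ∧ CondOwnStrict v X) →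
        s(0, 1) ∈ X 0 := by
  intro X hA hO hE
  by_contra h0
  have hX0 : X 0 = ∅ := by
    apply Finset.eq_empty_of_forall_notMem
    intro e he
    have h1 := hA.1 0 he
    have h2 := hO 0 e he
    have h3 : e = s(0, 1) := by
      have key : ∀ e ∈ gadgetEdges, (0 : Fin 4) ∈ e → e = s(0, 1) := by decide
      exact key e h1 h2
    exact h0 (h3 ▸ he)
  have hval : ∀ i, ∀ S ⊆ X i, v i S = -(S.card : ℝ) := by
    intro i S hS
    rw [hv, Finset.sum_congr rfl (g := fun _ => (-1 : ℝ))]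
    · simp
    · intro e he
      rw [if_pos ⟨hO i e (hS he), hA.1 i (hS he)⟩]
  have hone : ∀ i, ∀ e ∈ X i, ∀ f ∈ X i, e = f := by
    intro i e he f hf
    by_contra hne
    have hc : 1 < (X i).card := Finset.one_lt_card.mpr ⟨e, he, f, hf, hne⟩
    have hc' : (1 : ℝ) < ((X i).card : ℝ) := by exact_mod_cast hc
    have e1 := hval i (X i) (Finset.Subset.refl _)
    have e2 := hval i ((X i).erase e) (Finset.erase_subset _ _)
    have e3 : v i (X 0) = 0 := by rw [hX0, hv]; simp
    have e4 : (((X i).erase e).card : ℝ) + 1 = (X i).card := by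
      exact_mod_cast Finset.card_erase_add_one he
    have := hE.2 i 0 (by unfold Envies; linarith) e he (by linarith)
    linarith
  have hor : ∀ a b : Fin 4, s(a, b) ∈ gadgetEdges → s(a, b) ∈ X a ∨ s(a, b) ∈ X b := by
    intro a b hab
    obtain ⟨i, hi, _⟩ := hA.2 _ hab
    rcases Sym2.mem_iff.mp (hO i _ hi) with h | h
    · left; exact h ▸ hi
    · right; exact h ▸ hi
  have k1 := (hor 0 1 (by decide)).resolve_left h0
  have k2 := (hor 1 2 (by decide)).resolve_left
    fun h => absurd (hone 1 _ k1 _ h) (by decide)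
  have k3 := (hor 1 3 (by decide)).resolve_left
    fun h => absurd (hone 1 _ k1 _ h) (by decide)
  rcases hor 2 3 (by decide) with h | h
  · exact absurd (hone 2 _ k2 _ h) (by decide)
  · exact absurd (hone 3 _ k3 _ h) (by decide)
end

section
/- Consider a mixed instance on a simple graph in which every edge is a good for at least one of its two endpoint agents. Then every orientation that allocates each edge to an endpoint agent for whom it is a good is an EFX^+_0 allocation; in particular, an EFX^+_0 allocation exists for such instances. -/
open Finset

variable {V : Type*} [DecidableEq V]

theorem aux_good_nonneg {V : Type*} [DecidableEq V] (M : Finset (Sym2 V))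
    (w : Finset (Sym2 V) → ℝ) (S : Finset (Sym2 V)) :
    S ⊆ M → (∀ e ∈ S, IsGoodFor w M e) → w ∅ ≤ w S := by
  induction S using Finset.induction_on with
  | empty => intros; exact le_rfl
  | insert a S ha ih =>
    intro hS hg
    have h1 := ih (fun x hx => hS (Finset.mem_insert_of_mem hx))
      (fun x hx => hg x (Finset.mem_insert_of_mem hx))
    have h2 := hg a (Finset.mem_insert_self a S) S (fun x hx => Finset.mem_erase.2
      ⟨fun h => ha (h ▸ hx), hS (Finset.mem_insert_of_mem hx)⟩)
    exact h1.trans h2.le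

theorem aux_dummy_eq {V : Type*} [DecidableEq V] (M : Finset (Sym2 V))
    (w : Finset (Sym2 V) → ℝ) (S : Finset (Sym2 V)) :
    S ⊆ M → (∀ e ∈ S, IsDummyFor w M e) → w S = w ∅ := by
  induction S using Finset.induction_on with
  | empty => intros; rfl
  | insert a S ha ih =>
    intro hS hg
    have h1 := ih (fun x hx => hS (Finset.mem_insert_of_mem hx))
      (fun x hx => hg x (Finset.mem_insert_of_mem hx))
    have h2 := hg a (Finset.mem_insert_self a S) S (fun x hx => Finset.mem_erase.2
      ⟨fun h => ha (h ▸ hx), hS (Finset.mem_insert_of_mem hx)⟩)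
    exact h2.trans h1

/-- In a mixed instance where every edge is a good for at least one
of its endpoint agents, every orientation allocating each edge to an endpoint for whom
it is a good is EFX⁺₀; in particular an EFX⁺₀ allocation exists. -/
theorem stmt19 {V : Type*} [DecidableEq V]
    (M : Finset (Sym2 V)) (v : V → Finset (Sym2 V) → ℝ)
    (hvalid : ValidInstance M v)
    (hgood : ∀ e ∈ M, ∃ i ∈ e, IsGoodFor (v i) M e) :
    (∀ X : V → Finset (Sym2 V),
        IsAllocation M X → (∀ i, ∀ e ∈ X i, i ∈ e ∧ IsGoodFor (v i) M e) →
          CondEnviedStrict v X ∧ CondOwnWeak v X) ∧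
    (∃ X : V → Finset (Sym2 V),
        IsAllocation M X ∧ (∀ i, ∀ e ∈ X i, i ∈ e ∧ IsGoodFor (v i) M e) ∧
          CondEnviedStrict v X ∧ CondOwnWeak v X) := by
  have main : ∀ X : V → Finset (Sym2 V),
        IsAllocation M X → (∀ i, ∀ e ∈ X i, i ∈ e ∧ IsGoodFor (v i) M e) →
          CondEnviedStrict v X ∧ CondOwnWeak v X := by
    intro X hX hor
    obtain ⟨-, -, hdum⟩ := hvalid
    refine ⟨?_, ?_⟩
    · intro i j henvy e he hlt
      have hij : i ≠ j := by
        rintro rfl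
        exact lt_irrefl _ henvy
      have hie : i ∈ e := by
        by_contra hn
        have h := hdum i e (hX.1 j he) hn ((X j).erase e) (Finset.erase_subset_erase e (hX.1 j))
        rw [Finset.insert_erase he] at h
        exact absurd h hlt.ne'
      have hje := (hor j e he).1
      have hempty : v i ((X j).erase e) = v i ∅ := by
        apply aux_dummy_eq M
        · exact (Finset.erase_subset _ _).trans (hX.1 j)
        · intro f hf
          have hf' := Finset.mem_erase.1 hf
          refine hdum i f (hX.1 j hf'.2) (fun hif => hf'.1 ?_)
          have hjf := (hor j f hf'.2).1
          rw [(Sym2.mem_and_mem_iff hij).1 ⟨hif, hjf⟩, (Sym2.mem_and_mem_iff hij).1 ⟨hie, hje⟩]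
      rw [hempty]
      exact aux_good_nonneg M (v i) (X i) (hX.1 i) (fun f hf => (hor i f hf).2)
    · intro i j _ e he hle
      have h := (hor i e he).2 ((X i).erase e) (Finset.erase_subset_erase e (hX.1 i))
      rw [Finset.insert_erase he] at h
      exact absurd hle (not_le.2 h)
  refine ⟨main, ?_⟩
  choose f hf1 hf2 using hgood
  let X : V → Finset (Sym2 V) := fun i => (M.attach.filter (fun e => f e.1 e.2 = i)).image Subtype.val
  have hmem : ∀ i e, e ∈ X i ↔ ∃ h : e ∈ M, f e h = i := by
    intro i e
    simp [X]
  have hA : IsAllocation M X := by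
    refine ⟨fun i e he => ((hmem i e).1 he).1, fun e he => ⟨f e he, (hmem _ _).2 ⟨he, rfl⟩, ?_⟩⟩
    intro i hi
    obtain ⟨_, h⟩ := (hmem _ _).1 hi
    exact h.symm
  have hO : ∀ i, ∀ e ∈ X i, i ∈ e ∧ IsGoodFor (v i) M e := by
    intro i e he
    obtain ⟨h, rfl⟩ := (hmem _ _).1 he
    exact ⟨hf1 e h, hf2 e h⟩
  exact ⟨X, hA, hO, main X hA hO⟩
end
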